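/- arXiv:1602.02859 — 2 statements merged into one kernel-verified Lean document; each statement's English description precedes it below -/
import Mathlib

section
/- Let n ≥ 1, 0 < λ < n, 1 ≤ p, q ≤ ∞ and t, s ∈ ℝ. Then the fractional integral operator (Riesz potential) I_λ is bounded from 𝕃(p,t) to 𝕃(q,s) (i.e., there is a constant C with ‖I_λ f‖_{𝕃(q,s)} ≤ C‖f‖_{𝕃(p,t)} for all nonnegative measurable f) if and only if the tuple (q, p, s, t) satisfies condition C₄, namely: s ≤ t; λ/n + 1/q + s/n = 1/p + t/n; 1/q ≤ 1/p; 1/q+s/n > 0; 1/p+t/n < 1; and if s = t then q ≠ ∞ and p ≠ 1. -/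
/-!
Throughout, `d` is the dimension, and the work takes place on an abstract finite-dimensional real
normed space with a Haar measure; the theorem on `Fin n → ℝ` follows by transfer to
`EuclideanSpace ℝ (Fin n)` (`bounded_iff`).

**Sufficiency, `s < t`** (`rieszBounded_of_lt`). After the weights are absorbed, the operator has the
kernel `|x - y|^(lam - d) |x|^s |y|^(-t)`. With `1 / ρ = 1 / (1 - 1/p + 1/q)` as the power that makes
it homogeneous of degree `-d`, the kernel is a product of powers of two kernels homogeneous of degree
`-d`, one with bounded integral in `x` and the other with bounded integral in `y`; a Young–Schur test
(`schur`) applies. The two integrals are convolutions of powers of the norm (`lintegral_two_powers`),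
and their convergence is exactly `s < t`, `1/q + s/d > 0` and `1/p + t/d < 1`.

**Sufficiency, `s = t`** (`rieszBounded_of_eq`). Where `|x|` and `|y|` are not comparable, `|x - y|`
dominates both, so a small power of `|x - y|` can be traded for one of `|x|` or `|y|`: this reduces
to the case `s < t` with `lam` slightly larger (`kernel_split`). Where they are comparable the weights
cancel, leaving the unweighted Hardy–Littlewood–Sobolev inequality (`rieszBounded_hls`). The latter is
proved in bilinear form: on the part where `f(y)^p ≤ h(x)^r` the function `f` may be truncated at
height `h(x)^(r/p)`, and the potential of a function of bounded height is estimated pointwise.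

**Necessity** (`RieszBounded.necessary`). The test functions are the critical power
`|x|^(-(t + d/p))` cut off to annuli, whose weighted norm is a power of the logarithm of the ratio of
the radii (`eLpNorm_annPow`). Annuli of fixed ratio give the homogeneity relation; long annuli give
`1/q ≤ 1/p`, and if `1/p + t/d ≥ 1` or `1/q + s/d ≤ 0` the potential gains a further logarithm, which
forces `1 + 1/q ≤ 1/p`, that is `p = 1` and `q = ∞`; this contradicts homogeneity because `lam < d`
and `s ≤ t`. Moving a bump to infinity gives `s ≤ t`; if `s = t` the same translation yields the
unweighted inequality, to which the previous argument applies and excludes `p = 1` and `q = ∞`.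
-/

open scoped ENNReal NNReal BigOperators
open MeasureTheory

noncomputable section

/-- `1/q` for `q ∈ [0,∞]`, with the convention `1/∞ = 0`. -/
def iv (q : ℝ≥0∞) : ℝ := q⁻¹.toReal

/-- The dual exponent `q'` of `q ∈ [1,∞]`, defined by `1/q + 1/q' = 1`. -/
def dualExp (q : ℝ≥0∞) : ℝ≥0∞ :=
  if q = ∞ then 1 else if q = 1 then ∞ else ENNReal.ofReal (q.toReal / (q.toReal - 1))

/-- Euclidean norm `|k|` of an integer vector `k ∈ ℤⁿ`. -/
def znorm {n : ℕ} (k : Fin n → ℤ) : ℝ := Real.sqrt (∑ i, ((k i : ℝ)) ^ 2)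

/-- Japanese bracket `⟨k⟩ = (1+|k|²)^{1/2}` of an integer vector. -/
def zbr {n : ℕ} (k : Fin n → ℤ) : ℝ := Real.sqrt (1 + ∑ i, ((k i : ℝ)) ^ 2)

/-- Euclidean norm `|x|` on `ℝⁿ` (realized as `Fin n → ℝ`). -/
def rnorm {n : ℕ} (x : Fin n → ℝ) : ℝ := Real.sqrt (∑ i, (x i) ^ 2)

/-- Japanese bracket `⟨x⟩ = (1+|x|²)^{1/2}` on `ℝⁿ`. -/
def rbr {n : ℕ} (x : Fin n → ℝ) : ℝ := Real.sqrt (1 + ∑ i, (x i) ^ 2)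

/-- The weighted norm `‖a‖_{l(q,s)}` (weight `⟨k⟩^s`) of a nonnegative sequence on `ℤⁿ`,
valued in `ℝ≥0∞`.  For `q = ∞` it is `sup_k a_k ⟨k⟩^s`, otherwise
`(∑_k (a_k ⟨k⟩^s)^q)^{1/q}`. -/
def lns (n : ℕ) (q : ℝ≥0∞) (s : ℝ) (a : (Fin n → ℤ) → ℝ≥0∞) : ℝ≥0∞ :=
  if q = ∞ then ⨆ k, a k * ENNReal.ofReal (zbr k ^ s)
  else (∑' k, (a k * ENNReal.ofReal (zbr k ^ s)) ^ q.toReal) ^ (1 / q.toReal)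

/-- Convolution of (nonnegative) sequences on `ℤⁿ`: `(a∗b)(k) = ∑_j a_{k-j} b_j`. -/
def dconv {n : ℕ} (a b : (Fin n → ℤ) → ℝ≥0∞) : (Fin n → ℤ) → ℝ≥0∞ :=
  fun k => ∑' j, a (k - j) * b j

/-- The weighted norm `‖f‖_{L(q,s)}` (weight `⟨x⟩^s`) of a nonnegative function on `ℝⁿ`.
For `q = ∞` it is `ess sup_x f(x) ⟨x⟩^s`, otherwise `(∫ (f(x) ⟨x⟩^s)^q dx)^{1/q}`. -/
def Lns (n : ℕ) (q : ℝ≥0∞) (s : ℝ) (f : (Fin n → ℝ) → ℝ≥0∞) : ℝ≥0∞ :=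
  if q = ∞ then essSup (fun x => f x * ENNReal.ofReal (rbr x ^ s)) volume
  else (∫⁻ x, (f x * ENNReal.ofReal (rbr x ^ s)) ^ q.toReal) ^ (1 / q.toReal)

/-- The power-weighted norm `‖f‖_{𝕃(q,s)}` (weight `|x|^s`) of a nonnegative function on `ℝⁿ`. -/
def Pns (n : ℕ) (q : ℝ≥0∞) (s : ℝ) (f : (Fin n → ℝ) → ℝ≥0∞) : ℝ≥0∞ :=
  if q = ∞ then essSup (fun x => f x * ENNReal.ofReal (rnorm x ^ s)) volume
  else (∫⁻ x, (f x * ENNReal.ofReal (rnorm x ^ s)) ^ q.toReal) ^ (1 / q.toReal)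

/-- Convolution of (nonnegative) functions on `ℝⁿ`: `(f∗g)(x) = ∫ f(x-y) g(y) dy`. -/
def cconv {n : ℕ} (f g : (Fin n → ℝ) → ℝ≥0∞) : (Fin n → ℝ) → ℝ≥0∞ :=
  fun x => ∫⁻ y, f (x - y) * g y

/-- The discrete fractional integral operator `(𝓘_λ a)(k) = ∑_{j ≠ k} a_j / |k-j|^{n-λ}`. -/
def dRiesz (n : ℕ) (lam : ℝ) (a : (Fin n → ℤ) → ℝ≥0∞) : (Fin n → ℤ) → ℝ≥0∞ :=
  fun k => ∑' j, if j = k then 0 else a j * ENNReal.ofReal (znorm (k - j) ^ (lam - (n : ℝ)))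

/-- The Riesz potential `(I_λ f)(x) = ∫ f(y) / |x-y|^{n-λ} dy`. -/
def cRiesz (n : ℕ) (lam : ℝ) (f : (Fin n → ℝ) → ℝ≥0∞) : (Fin n → ℝ) → ℝ≥0∞ :=
  fun x => ∫⁻ y, f y * ENNReal.ofReal (rnorm (x - y) ^ (lam - (n : ℝ)))

/-- Condition `𝒜₁`. -/
def condA1 (n : ℕ) (q q₁ q₂ : ℝ≥0∞) (s s₁ s₂ : ℝ) : Prop :=
  s ≤ s₁ ∧ s ≤ s₂ ∧ 0 ≤ s₁ + s₂ ∧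
  1 + max (iv q + s / (n : ℝ)) 0 < max (iv q₁ + s₁ / (n : ℝ)) 0 + max (iv q₂ + s₂ / (n : ℝ)) 0 ∧
  iv q + s / (n : ℝ) ≤ iv q₁ + s₁ / (n : ℝ) ∧
  iv q + s / (n : ℝ) ≤ iv q₂ + s₂ / (n : ℝ) ∧
  1 ≤ iv q₁ + s₁ / (n : ℝ) + iv q₂ + s₂ / (n : ℝ) ∧
  (iv q + s / (n : ℝ) = iv q₁ + s₁ / (n : ℝ) → q = q₁ ∧ s = s₁) ∧
  (iv q + s / (n : ℝ) = iv q₂ + s₂ / (n : ℝ) → q = q₂ ∧ s = s₂) ∧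
  (1 = iv q₁ + s₁ / (n : ℝ) + iv q₂ + s₂ / (n : ℝ) → dualExp q₁ = q₂ ∧ -s₁ = s₂)

/-- Condition `𝒜₂`. -/
def condA2 (q q₁ q₂ : ℝ≥0∞) (s s₁ s₂ : ℝ) : Prop :=
  s = 0 ∧ s₁ = 0 ∧ s₂ = 0 ∧
  ((q = q₁ ∧ q₂ = 1) ∨ (q = q₂ ∧ q₁ = 1) ∨ (q = ∞ ∧ iv q₁ + iv q₂ = 1))

/-- Condition `𝒜₃`. -/
def condA3 (n : ℕ) (q q₁ q₂ : ℝ≥0∞) (s s₁ s₂ : ℝ) : Prop :=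
  s ≤ s₁ ∧ s ≤ s₂ ∧ iv q₁ + iv q₂ = 1 ∧ s₁ + s₂ = 0 ∧
  iv q + s / (n : ℝ) < 0 ∧ 0 ≤ iv q₁ + s₁ / (n : ℝ) ∧ 0 ≤ iv q₂ + s₂ / (n : ℝ)

/-- Condition `𝒜₄`. -/
def condA4 (n : ℕ) (q q₁ q₂ : ℝ≥0∞) (s s₁ s₂ : ℝ) : Prop :=
  s ≤ s₁ ∧ s ≤ s₂ ∧ 0 ≤ s₁ + s₂ ∧
  1 + (iv q + s / (n : ℝ)) = iv q₁ + s₁ / (n : ℝ) + iv q₂ + s₂ / (n : ℝ) ∧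
  iv q ≤ iv q₁ + iv q₂ ∧
  iv q + s / (n : ℝ) < iv q₁ + s₁ / (n : ℝ) ∧
  iv q + s / (n : ℝ) < iv q₂ + s₂ / (n : ℝ) ∧
  0 < iv q + s / (n : ℝ) ∧
  ((s = s₁ ∨ s = s₂) → q ≠ ∞ ∧ q₁ ≠ 1 ∧ q₂ ≠ 1)

/-- Condition `𝒞₁`. -/
def condC1 (n : ℕ) (lam : ℝ) (q p : ℝ≥0∞) (s t : ℝ) : Prop :=
  s ≤ t ∧
  lam / (n : ℝ) + max (iv q + s / (n : ℝ)) 0 < max (iv p + t / (n : ℝ)) 0 ∧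
  lam / (n : ℝ) + iv q + s / (n : ℝ) ≤ 1 ∧
  (lam / (n : ℝ) + iv q + s / (n : ℝ) = 1 → q = ∞ ∧ s = (n : ℝ) - lam)

/-- Condition `𝒞₃`. -/
def condC3 (n : ℕ) (lam : ℝ) (q p : ℝ≥0∞) (s t : ℝ) : Prop :=
  s ≤ t ∧ p = 1 ∧ t = lam - (n : ℝ) ∧ iv q + s / (n : ℝ) < 0

/-- Condition `𝒞₄`. -/
def condC4 (n : ℕ) (lam : ℝ) (q p : ℝ≥0∞) (s t : ℝ) : Prop :=
  s ≤ t ∧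
  lam / (n : ℝ) + iv q + s / (n : ℝ) = iv p + t / (n : ℝ) ∧
  iv q ≤ iv p ∧
  0 < iv q + s / (n : ℝ) ∧
  iv p + t / (n : ℝ) < 1 ∧
  (s = t → q ≠ ∞ ∧ p ≠ 1)

end

set_option linter.unusedSectionVars false

/-! ### Radial integrals -/

namespace SteinWeiss

open Set Metric

variable {E : Type*} [NormedAddCommGroup E] [NormedSpace ℝ E] [FiniteDimensional ℝ E]
  [Nontrivial E] [MeasurableSpace E] [BorelSpace E] (μ : Measure E) [μ.IsAddHaarMeasure]

local notation "dim" => Module.finrank ℝ E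

/-- Integration in polar coordinates of a radial function. -/
lemma lintegral_radial {f : ℝ → ℝ≥0∞} (hf : Measurable f) :
    ∫⁻ x, f ‖x‖ ∂μ = (dim * μ (ball 0 1)) *
      ∫⁻ y in Ioi (0 : ℝ), ENNReal.ofReal (y ^ (dim - 1)) * f y := by
  calc ∫⁻ x, f ‖x‖ ∂μ = ∫⁻ x : ({(0)}ᶜ : Set E), f (‖x.1‖) ∂(μ.comap (↑)) := by
        rw [lintegral_subtype_comap (measurableSet_singleton _).compl fun x ↦ f (‖x‖),
          restrict_compl_singleton]
    _ = ∫⁻ x, f x.2 ∂μ.toSphere.prod (.volumeIoiPow (dim - 1)) := by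
        simpa using μ.measurePreserving_homeomorphUnitSphereProd.lintegral_comp_emb
          (Homeomorph.measurableEmbedding _) (f ∘ Subtype.val ∘ Prod.snd)
    _ = μ.toSphere univ * ∫⁻ x : Ioi (0 : ℝ), f x ∂.volumeIoiPow (dim - 1) := by
        rw [lintegral_prod _ (by fun_prop)]
        simp [mul_comm]
    _ = _ := by
        rw [μ.toSphere_apply_univ, Measure.volumeIoiPow,
          lintegral_withDensity_eq_lintegral_mul _ (by fun_prop) (by fun_prop)]
        congr 1
        exact lintegral_subtype_comap measurableSet_Ioi
          (fun a : ℝ ↦ ENNReal.ofReal (a ^ (dim - 1)) * f a)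

/-- The surface measure of the unit sphere, as a real number. -/
noncomputable def sph : ℝ := dim * μ.real (ball 0 1)

lemma sph_pos : 0 < sph μ := by
  have h1 : 0 < dim := Module.finrank_pos
  have h2 : 0 < μ.real (ball (0 : E) 1) :=
    ENNReal.toReal_pos (isOpen_ball.measure_ne_zero μ (nonempty_ball.2 one_pos))
      measure_ball_lt_top.ne
  unfold sph; positivity

lemma ofReal_sph : ENNReal.ofReal (sph μ) = dim * μ (ball (0 : E) 1) := by
  unfold sph
  rw [ENNReal.ofReal_mul (by positivity), ENNReal.ofReal_natCast, Measure.real,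
    ENNReal.ofReal_toReal measure_ball_lt_top.ne]

/-- Powers of the norm on a radial set, reduced to a one-dimensional integral. -/
lemma setLIntegral_radial_rpow (e : ℝ) {S : Set ℝ} (hS : MeasurableSet S) :
    ∫⁻ x in {x : E | ‖x‖ ∈ S}, ‖x‖ₑ ^ e ∂μ = ENNReal.ofReal (sph μ) *
      ∫⁻ y in S ∩ Ioi (0 : ℝ), ENNReal.ofReal (y ^ (dim - 1 + e)) := by
  have h1 : ∫⁻ x in {x : E | ‖x‖ ∈ S}, ‖x‖ₑ ^ e ∂μ =
      ∫⁻ x, (fun r : ℝ ↦ S.indicator (fun r ↦ ENNReal.ofReal r ^ e) r) ‖x‖ ∂μ := by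
    have hS' : MeasurableSet {x : E | ‖x‖ ∈ S} := measurable_norm hS
    rw [← lintegral_indicator hS']
    refine lintegral_congr fun x ↦ ?_
    by_cases hx : ‖x‖ ∈ S
    · simp [hx, ofReal_norm]
    · simp [hx]
  rw [h1, lintegral_radial μ (by
    exact ((ENNReal.measurable_ofReal.pow_const e).indicator hS)), ofReal_sph]
  congr 1
  rw [← Measure.restrict_restrict hS, ← lintegral_indicator hS]
  refine setLIntegral_congr_fun measurableSet_Ioi fun y (hy : 0 < y) ↦ ?_
  by_cases hyS : y ∈ S
  · simp only [hyS, indicator_of_mem]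
    have hd : 1 ≤ dim := Module.finrank_pos
    rw [ENNReal.ofReal_rpow_of_pos hy, ← ENNReal.ofReal_mul (by positivity),
      Real.rpow_add hy, ← Real.rpow_natCast]
    push_cast [hd]
    rfl
  · simp [hyS]

/-- A power `‖x‖ ^ e` with `e > -d` is integrable near the origin, with the growth dictated by
scaling. -/
lemma setLIntegral_ball_rpow {e : ℝ} (he : -dim < e) :
    ∃ K : ℝ≥0, ∀ R : ℝ, 0 < R →
      ∫⁻ x in {x : E | ‖x‖ < R}, ‖x‖ₑ ^ e ∂μ ≤ K * ENNReal.ofReal R ^ (dim + e) := by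
  refine ⟨(sph μ / (dim + e)).toNNReal, fun R hR ↦ ?_⟩
  have := setLIntegral_radial_rpow μ e (measurableSet_Iio (a := R))
  simp only [mem_Iio] at this
  have hs := (sph_pos μ).le
  have hp : (0 : ℝ) < dim + e := by linarith
  rw [this, inter_comm, Ioi_inter_Iio, ENNReal.ofReal_rpow_of_pos hR,
    setLIntegral_congr (Ioo_ae_eq_Ioc (μ := volume)),
    ← ofReal_integral_eq_lintegral_ofReal, ← intervalIntegral.integral_of_le hR.le, integral_rpow]
  · have h0 : (dim - 1 + e + 1 : ℝ) = dim + e := by ring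
    rw [h0, Real.zero_rpow hp.ne', sub_zero, ← ENNReal.ofReal_mul hs]
    change _ ≤ ENNReal.ofReal _ * _
    rw [← ENNReal.ofReal_mul (by positivity)]
    apply le_of_eq; congr 1; ring
  · left; linarith
  · exact (intervalIntegral.intervalIntegrable_rpow' (by linarith)).1
  · exact (ae_restrict_mem measurableSet_Ioc).mono fun x hx ↦ Real.rpow_nonneg hx.1.le _

/-- A power `‖x‖ ^ e` with `e < -d` is integrable near infinity, with the decay dictated by
scaling. -/
lemma setLIntegral_compl_ball_rpow {e : ℝ} (he : e < -dim) :
    ∃ K : ℝ≥0, ∀ R : ℝ, 0 < R →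
      ∫⁻ x in {x : E | R ≤ ‖x‖}, ‖x‖ₑ ^ e ∂μ ≤ K * ENNReal.ofReal R ^ (dim + e) := by
  refine ⟨(-sph μ / (dim + e)).toNNReal, fun R hR ↦ ?_⟩
  have := setLIntegral_radial_rpow μ e (measurableSet_Ici (a := R))
  simp only [mem_Ici] at this
  have hs := (sph_pos μ).le
  have hp : (dim + e : ℝ) < 0 := by linarith
  have h1 : Ici R ∩ Ioi 0 = Ici R := inter_eq_left.2 fun x hx ↦ mem_Ioi.2 (hR.trans_le hx)
  rw [this, h1, ENNReal.ofReal_rpow_of_pos hR,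
    setLIntegral_congr (Ioi_ae_eq_Ici (μ := volume)).symm,
    ← ofReal_integral_eq_lintegral_ofReal, integral_Ioi_rpow_of_lt _ hR]
  · have h0 : (dim - 1 + e + 1 : ℝ) = dim + e := by ring
    rw [h0, ← ENNReal.ofReal_mul hs]
    change _ ≤ ENNReal.ofReal _ * _
    rw [← ENNReal.ofReal_mul (by rw [div_eq_mul_inv]; nlinarith [inv_lt_zero.2 hp])]
    apply le_of_eq; congr 1; ring
  · linarith
  · exact integrableOn_Ioi_rpow_of_lt (by linarith) hR
  · exact (ae_restrict_mem measurableSet_Ioi).mono fun x hx ↦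
      Real.rpow_nonneg (hR.le.trans (le_of_lt hx)) _

/-- The scale-invariant measure `|x|^{-d} dx` of an annulus. -/
lemma setLIntegral_annulus {a b : ℝ} (ha : 0 < a) (hab : a ≤ b) :
    ∫⁻ x in {x : E | a ≤ ‖x‖ ∧ ‖x‖ < b}, ‖x‖ₑ ^ (-dim : ℝ) ∂μ =
      ENNReal.ofReal (sph μ * Real.log (b / a)) := by
  have := setLIntegral_radial_rpow μ (-dim : ℝ) (measurableSet_Ico (a := a) (b := b))
  simp only [mem_Ico] at this
  have hs := (sph_pos μ).le
  have h0 : (dim - 1 + -dim : ℝ) = -1 := by ring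
  have h1 : Ico a b ∩ Ioi 0 = Ico a b := inter_eq_left.2 fun x hx ↦ mem_Ioi.2 (ha.trans_le hx.1)
  rw [this, h1, h0,
    setLIntegral_congr (Ico_ae_eq_Ioc (μ := volume)),
    ENNReal.ofReal_mul hs, ← ofReal_integral_eq_lintegral_ofReal,
    ← intervalIntegral.integral_of_le hab]
  · simp_rw [Real.rpow_neg_one]
    rw [integral_inv_of_pos ha (ha.trans_le hab)]
  · simp_rw [Real.rpow_neg_one]
    refine (intervalIntegral.intervalIntegrable_inv (fun x hx ↦ ?_) continuousOn_id).1
    rw [uIcc_of_le hab] at hx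
    exact (ha.trans_le hx.1).ne'
  · exact (ae_restrict_mem measurableSet_Ioc).mono fun x hx ↦
      Real.rpow_nonneg (ha.le.trans hx.1.le) _

end SteinWeiss

/-! ### Convolution of powers of the norm -/

namespace SteinWeiss

open Set Metric

lemma rpow_le_of_nonpos {a b c : ℝ≥0∞} (hc : 1 ≤ c) (hc' : c ≠ ∞) {e : ℝ} (he : e ≤ 0)
    (h : b ≤ c * a) : a ^ e ≤ c ^ (-e) * b ^ e := by
  have h0 : 0 ≤ -e := by linarith
  have hc0 : c ≠ 0 := (zero_lt_one.trans_le hc).ne'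
  have h1 : b ^ (-e) ≤ c ^ (-e) * a ^ (-e) := by
    rw [← ENNReal.mul_rpow_of_nonneg _ _ h0]
    exact ENNReal.rpow_le_rpow h h0
  have h2 : c ^ (-e) ≠ 0 := by simp [hc0, hc']
  have h3 : c ^ (-e) ≠ ∞ := ENNReal.rpow_ne_top_of_nonneg h0 hc'
  have h4 := ENNReal.inv_le_inv.2 h1
  rw [ENNReal.mul_inv (Or.inl h2) (Or.inl h3)] at h4
  have ha : a ^ e = (a ^ (-e))⁻¹ := by rw [← ENNReal.rpow_neg, neg_neg]
  have hb : b ^ e = (b ^ (-e))⁻¹ := by rw [← ENNReal.rpow_neg, neg_neg]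
  rw [ha, hb]
  calc (a ^ (-e))⁻¹ = c ^ (-e) * ((c ^ (-e))⁻¹ * (a ^ (-e))⁻¹) := by
        rw [← mul_assoc, ENNReal.mul_inv_cancel h2 h3, one_mul]
    _ ≤ _ := by gcongr

lemma rpow_le_of_comparable {a b c : ℝ≥0∞} (hc : 1 ≤ c) (hc' : c ≠ ∞) (e : ℝ)
    (h : a ≤ c * b) (h' : b ≤ c * a) : a ^ e ≤ c ^ |e| * b ^ e := by
  rcases le_total e 0 with he | he
  · rw [abs_of_nonpos he]; exact rpow_le_of_nonpos hc hc' he h'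
  · rw [abs_of_nonneg he, ← ENNReal.mul_rpow_of_nonneg _ _ he]
    exact ENNReal.rpow_le_rpow h he

section
variable {E : Type*} [NormedAddCommGroup E]

lemma enorm_le_ofReal_mul {x y : E} {c : ℝ} (hc : 0 ≤ c) (h : ‖x‖ ≤ c * ‖y‖) :
    ‖x‖ₑ ≤ ENNReal.ofReal c * ‖y‖ₑ := by
  rw [← ofReal_norm, ← ofReal_norm, ← ENNReal.ofReal_mul hc]
  exact ENNReal.ofReal_le_ofReal h

lemma enorm_rpow_mul {x : E} (hx : x ≠ 0) (a b : ℝ) : ‖x‖ₑ ^ a * ‖x‖ₑ ^ b = ‖x‖ₑ ^ (a + b) :=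
  (ENNReal.rpow_add _ _ (by simpa using hx) enorm_ne_top).symm

lemma enorm_rpow_ne_top {x : E} (hx : x ≠ 0) (a : ℝ) : ‖x‖ₑ ^ a ≠ ∞ := by
  simp [ENNReal.rpow_eq_top_iff, hx]

lemma enorm_rpow_ne_zero {x : E} (hx : x ≠ 0) (a : ℝ) : ‖x‖ₑ ^ a ≠ 0 := by
  simp [ENNReal.rpow_eq_zero_iff, hx]
end

variable {E : Type*} [NormedAddCommGroup E] [NormedSpace ℝ E] [FiniteDimensional ℝ E]
  [Nontrivial E] [MeasurableSpace E] [BorelSpace E] (μ : Measure E) [μ.IsAddHaarMeasure]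

local notation "dim" => Module.finrank ℝ E

/-- The convolution of two powers of the norm is controlled by the power dictated by scaling. -/
lemma lintegral_two_powers {m v : ℝ} (hm : m < dim) (hv : v < dim)
    (hmv : dim < m + v) :
    ∃ K : ℝ≥0∞, K ≠ ∞ ∧ ∀ x : E, x ≠ 0 →
      ∫⁻ y, ‖x - y‖ₑ ^ (-m) * ‖y‖ₑ ^ (-v) ∂μ ≤ K * ‖x‖ₑ ^ (dim - m - v) := by
  obtain ⟨K1, hK1⟩ := setLIntegral_ball_rpow μ (e := -v) (by linarith)
  obtain ⟨K2, hK2⟩ := setLIntegral_ball_rpow μ (e := -m) (by linarith)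
  obtain ⟨K3, hK3⟩ := setLIntegral_compl_ball_rpow μ (e := -m - v) (by linarith)
  refine ⟨(K1 + 3 ^ |-v| * K2 + 3 ^ m * K3) * 2 ^ |dim - m - v|, ?_, fun x hx ↦ ?_⟩
  · have h3 : ∀ e : ℝ, (3 : ℝ≥0∞) ^ e ≠ ∞ := fun e ↦ by simp [ENNReal.rpow_eq_top_iff]
    have h2 : ∀ e : ℝ, (2 : ℝ≥0∞) ^ e ≠ ∞ := fun e ↦ by simp [ENNReal.rpow_eq_top_iff]
    finiteness [h3 (|-v|), h3 m, h2 (|dim - m - v|)]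
  have hx0 : 0 < ‖x‖ := norm_pos_iff.2 hx
  set R : ℝ := ‖x‖ / 2 with hR
  have hR0 : 0 < R := by positivity
  set r := ENNReal.ofReal R with hr
  have hr0 : r ≠ 0 := by simpa [hr] using hR0
  have hrt : r ≠ ∞ := ENNReal.ofReal_ne_top
  have hadd : ∀ e e' : ℝ, r ^ e * r ^ e' = r ^ (e + e') := fun e e' ↦
    (ENNReal.rpow_add _ _ hr0 hrt).symm
  have hrle : ∀ {y : E}, R ≤ ‖y‖ → r ≤ ‖y‖ₑ := fun {y} hy ↦ by
    rw [hr, ← ofReal_norm]; exact ENNReal.ofReal_le_ofReal hy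
  have hle : ∀ {y : E}, ‖y‖ ≤ 3 * R → ‖y‖ₑ ≤ 3 * r := fun {y} hy ↦ by
    rw [hr, ← ofReal_norm, ← ENNReal.ofReal_ofNat, ← ENNReal.ofReal_mul (by norm_num)]
    exact ENNReal.ofReal_le_ofReal hy
  have h31 : (1 : ℝ≥0∞) ≤ 3 := by norm_num
  have h3t : (3 : ℝ≥0∞) ≠ ∞ := by norm_num
  set A : Set E := {y | ‖y‖ < R}
  set B : Set E := {y | ‖y‖ < R}
  set D : Set E := {y | R ≤ ‖y‖}
  have hA : MeasurableSet A := measurableSet_lt measurable_norm measurable_const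
  have hD : MeasurableSet D := measurableSet_le measurable_const measurable_norm
  have hpt : ∀ y, ‖x - y‖ₑ ^ (-m) * ‖y‖ₑ ^ (-v) ≤
      A.indicator (fun y ↦ r ^ (-m) * ‖y‖ₑ ^ (-v)) y +
      B.indicator (fun z ↦ 3 ^ |-v| * r ^ (-v) * ‖z‖ₑ ^ (-m)) (x - y) +
      D.indicator (fun y ↦ 3 ^ m * ‖y‖ₑ ^ (-m - v)) y := by
    intro y
    have ht := norm_sub_norm_le x y
    have ht' := norm_sub_le x (x - y)
    rw [sub_sub_cancel] at ht'
    by_cases hyA : ‖y‖ < R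
    · have : y ∈ A := hyA
      rw [indicator_of_mem this, add_assoc]
      refine le_add_right ?_
      refine mul_le_mul' ?_ le_rfl
      have : r ≤ ‖x - y‖ₑ := hrle (by linarith)
      have h := rpow_le_of_nonpos le_rfl ENNReal.one_ne_top (e := -m) (by linarith)
        (this.trans_eq (one_mul _).symm)
      rwa [ENNReal.one_rpow, one_mul] at h
    by_cases hyB : ‖x - y‖ < R
    · have : x - y ∈ B := hyB
      rw [indicator_of_mem this, add_right_comm]
      refine le_add_left ?_
      rw [mul_comm]
      gcongr
      refine rpow_le_of_comparable h31 h3t _ (hle (by linarith)) ?_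
      refine (hrle (not_lt.1 hyA)).trans ?_
      exact le_mul_of_one_le_left' h31
    · have : y ∈ D := not_lt.1 hyA
      rw [indicator_of_mem this]
      refine le_add_left ?_
      have hy0 : y ≠ 0 := by
        rintro rfl; simp at hyA; linarith
      have h1 : ‖x - y‖ₑ ^ (-m) ≤ 3 ^ m * ‖y‖ₑ ^ (-m) := by
        have := rpow_le_of_nonpos (a := ‖x - y‖ₑ) (b := ‖y‖ₑ) h31 h3t (e := -m) (by linarith) (by
          have := enorm_le_ofReal_mul (x := y) (y := x - y) (c := 3) (by norm_num) (by linarith)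
          simpa using this)
        simpa using this
      calc _ ≤ 3 ^ m * ‖y‖ₑ ^ (-m) * ‖y‖ₑ ^ (-v) := by gcongr
        _ = _ := by rw [mul_assoc, enorm_rpow_mul hy0, ← sub_eq_add_neg]
  have hmeas : ∀ e : ℝ, Measurable fun y : E ↦ ‖y‖ₑ ^ e := fun e ↦ by fun_prop
  have hsub : Measurable fun y : E ↦ x - y := by fun_prop
  calc _ ≤ ∫⁻ y, (A.indicator (fun y ↦ r ^ (-m) * ‖y‖ₑ ^ (-v)) y +
      B.indicator (fun z ↦ 3 ^ |-v| * r ^ (-v) * ‖z‖ₑ ^ (-m)) (x - y) +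
      D.indicator (fun y ↦ 3 ^ m * ‖y‖ₑ ^ (-m - v)) y) ∂μ := lintegral_mono hpt
    _ = r ^ (-m) * (∫⁻ y in A, ‖y‖ₑ ^ (-v) ∂μ) +
        3 ^ |-v| * r ^ (-v) * (∫⁻ y in B, ‖y‖ₑ ^ (-m) ∂μ) +
        3 ^ m * (∫⁻ y in D, ‖y‖ₑ ^ (-m - v) ∂μ) := by
      have hB' : Measurable (B.indicator (fun z ↦ 3 ^ |-v| * r ^ (-v) * ‖z‖ₑ ^ (-m))) :=
        ((hmeas _).const_mul _).indicator hA
      rw [lintegral_add_right _ (((hmeas _).const_mul _).indicator hD),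
        lintegral_add_right (g := fun y ↦ B.indicator _ (x - y)) _ (hB'.comp hsub),
        lintegral_sub_left_eq_self (μ := μ)
          (B.indicator (fun z ↦ 3 ^ |-v| * r ^ (-v) * ‖z‖ₑ ^ (-m))) x,
        lintegral_indicator hA, lintegral_indicator hA, lintegral_indicator hD,
        lintegral_const_mul _ (hmeas _), lintegral_const_mul _ (hmeas _),
        lintegral_const_mul _ (hmeas _)]
    _ ≤ r ^ (-m) * (K1 * r ^ (dim + -v)) + 3 ^ |-v| * r ^ (-v) * (K2 * r ^ (dim + -m)) +
        3 ^ m * (K3 * r ^ (dim + (-m - v))) := by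
      gcongr
      · exact hK1 R hR0
      · exact hK2 R hR0
      · exact hK3 R hR0
    _ = (K1 + 3 ^ |-v| * K2 + 3 ^ m * K3) * r ^ (dim - m - v) := by
      have e1 : r ^ (-m) * r ^ (dim + -v) = r ^ (dim - m - v) := by rw [hadd]; congr 1; ring
      have e2 : r ^ (-v) * r ^ (dim + -m) = r ^ (dim - m - v) := by rw [hadd]; congr 1; ring
      have e3 : r ^ (dim + (-m - v)) = r ^ (dim - m - v) := by congr 1; ring
      rw [e3, add_mul, add_mul]
      congr 1
      · congr 1
        · rw [← e1]; ring
        · rw [← e2]; ring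
      · ring
    _ ≤ _ := by
      rw [mul_assoc]
      gcongr
      have : r = ‖x‖ₑ / 2 := by
        rw [hr, hR, ENNReal.ofReal_div_of_pos (by norm_num), ofReal_norm, ENNReal.ofReal_ofNat]
      refine rpow_le_of_comparable (by norm_num) (by norm_num) _ ?_ ?_
      · rw [this]
        exact ENNReal.half_le_self.trans (le_mul_of_one_le_left' (by norm_num))
      · rw [this, ENNReal.mul_div_cancel (by norm_num) (by norm_num)]

end SteinWeiss

/-! ### A Young–Schur test and the case `s < t` -/

namespace SteinWeiss

open Set Metric

section Schur

variable {α β : Type*} [MeasurableSpace α] [MeasurableSpace β]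

lemma toReal_inv_mem {p : ℝ≥0∞} (hp : 1 ≤ p) : 0 ≤ p⁻¹.toReal ∧ p⁻¹.toReal ≤ 1 := by
  refine ⟨ENNReal.toReal_nonneg, ?_⟩
  have : p⁻¹ ≤ 1 := ENNReal.inv_le_one.2 hp
  simpa using ENNReal.toReal_mono ENNReal.one_ne_top this

lemma toReal_inv_anti {p q : ℝ≥0∞} (hp : 1 ≤ p) (hpq : p ≤ q) : q⁻¹.toReal ≤ p⁻¹.toReal :=
  ENNReal.toReal_mono (by simpa using (zero_lt_one.trans_le hp).ne') (ENNReal.inv_le_inv.2 hpq)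

/-- A Young–Schur test: an integral operator whose kernel splits as
`k₁ ^ (1/q) * k₃ ^ (1 - 1/p)`, with `k₁` uniformly integrable in the first variable and `k₃` in
the second, maps `L^p` to `L^q` for `p ≤ q`. -/
lemma schur {μ : Measure α} {ν : Measure β} [SFinite μ] [SFinite ν] {p q : ℝ≥0∞}
    (hp : 1 ≤ p) (hpq : p ≤ q) {k k1 k3 : α → β → ℝ≥0∞}
    (hk1 : Measurable (Function.uncurry k1)) (hk3 : Measurable (Function.uncurry k3)) {A : ℝ≥0∞}
    (hk : ∀ᵐ x ∂μ, ∀ᵐ y ∂ν, k x y ≤ k1 x y ^ q⁻¹.toReal * k3 x y ^ (1 - p⁻¹.toReal))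
    (h1 : ∀ᵐ y ∂ν, ∫⁻ x, k1 x y ∂μ ≤ A) (h3 : ∀ᵐ x ∂μ, ∫⁻ y, k3 x y ∂ν ≤ A)
    {g : β → ℝ≥0∞} (hg : Measurable g) :
    eLpNorm (fun x ↦ ∫⁻ y, g y * k x y ∂ν) q μ ≤
      A ^ (1 - p⁻¹.toReal + q⁻¹.toReal) * eLpNorm g p ν := by
  obtain ⟨ha0, ha1⟩ := toReal_inv_mem hp
  have hba := toReal_inv_anti hp hpq
  have hb0 : 0 ≤ q⁻¹.toReal := ENNReal.toReal_nonneg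
  have hp0 : p ≠ 0 := (zero_lt_one.trans_le hp).ne'
  have hq0 : q ≠ 0 := (zero_lt_one.trans_le (hp.trans hpq)).ne'
  rcases eq_or_ne p ∞ with rfl | hpt
  · obtain rfl : q = ∞ := top_unique hpq
    simp only [eLpNorm_exponent_top, ENNReal.inv_top, ENNReal.toReal_zero, sub_zero, add_zero,
      ENNReal.rpow_one, ENNReal.rpow_zero, one_mul] at hk ⊢
    refine essSup_le_of_ae_le _ ?_
    filter_upwards [hk, h3] with x hx hx3
    rw [enorm_eq_self]
    have hgb : ∀ᵐ y ∂ν, g y ≤ eLpNormEssSup g ν := by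
      simpa using ae_le_eLpNormEssSup (f := g) (μ := ν)
    calc ∫⁻ y, g y * k x y ∂ν ≤ ∫⁻ y, eLpNormEssSup g ν * k3 x y ∂ν := by
          refine lintegral_mono_ae ?_
          filter_upwards [hx, hgb] with y h h'
          gcongr
      _ = eLpNormEssSup g ν * ∫⁻ y, k3 x y ∂ν :=
          lintegral_const_mul _ (hk3.comp measurable_prodMk_left)
      _ ≤ _ := by rw [mul_comm]; gcongr
  have hpr : 0 < p.toReal := ENNReal.toReal_pos hp0 hpt
  have hpa : p.toReal * p⁻¹.toReal = 1 := by
    rw [ENNReal.toReal_inv, mul_inv_cancel₀ hpr.ne']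
  generalize ha : p⁻¹.toReal = a at *
  generalize hb : q⁻¹.toReal = b at *
  set P := ∫⁻ y, g y ^ p.toReal ∂ν with hP
  have hnorm : eLpNorm g p ν = P ^ a := by
    rw [eLpNorm_eq_lintegral_rpow_enorm_toReal hp0 hpt, one_div, ← ENNReal.toReal_inv, ha]
    simp [hP]
  have key : ∀ᵐ x ∂μ, ∫⁻ y, g y * k x y ∂ν ≤
      (∫⁻ y, g y ^ p.toReal * k1 x y ∂ν) ^ b * P ^ (a - b) * A ^ (1 - a) := by
    filter_upwards [hk, h3] with x hx hx3
    have m1 : Measurable (k1 x) := hk1.comp measurable_prodMk_left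
    have m3 : Measurable (k3 x) := hk3.comp measurable_prodMk_left
    have hol := ENNReal.lintegral_prod_norm_pow_le (μ := ν) (Finset.univ : Finset (Fin 3))
      (f := ![fun y ↦ g y ^ p.toReal * k1 x y, fun y ↦ g y ^ p.toReal, fun y ↦ k3 x y])
      (p := ![b, a - b, 1 - a]) (by
        intro i _
        fin_cases i
        · exact ((hg.pow_const _).mul m1).aemeasurable
        · exact (hg.pow_const _).aemeasurable
        · exact m3.aemeasurable)
      (by rw [Fin.sum_univ_three]; simp) (by
        intro i _
        fin_cases i
        · exact hb0
        · exact sub_nonneg.2 hba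
        · exact sub_nonneg.2 ha1)
    simp only [Fin.prod_univ_three, Matrix.cons_val_zero, Matrix.cons_val_one,
      Matrix.cons_val] at hol
    calc ∫⁻ y, g y * k x y ∂ν ≤ ∫⁻ y, (g y ^ p.toReal * k1 x y) ^ b *
          (g y ^ p.toReal) ^ (a - b) * k3 x y ^ (1 - a) ∂ν := by
          refine lintegral_mono_ae ?_
          filter_upwards [hx] with y hy
          calc g y * k x y ≤ g y * (k1 x y ^ b * k3 x y ^ (1 - a)) := by gcongr
            _ = _ := by
              rw [ENNReal.mul_rpow_of_nonneg _ _ hb0]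
              have : g y = (g y ^ p.toReal) ^ b * (g y ^ p.toReal) ^ (a - b) := by
                rw [← ENNReal.rpow_add_of_nonneg _ _ hb0 (sub_nonneg.2 hba),
                  ← ENNReal.rpow_mul, add_sub_cancel, hpa, ENNReal.rpow_one]
              conv_lhs => rw [this]
              ring
      _ ≤ _ := hol
      _ ≤ _ := by gcongr
  rcases eq_or_ne q ∞ with rfl | hqt
  · obtain rfl : b = 0 := by simpa using hb.symm
    rw [eLpNorm_exponent_top, hnorm]
    refine essSup_le_of_ae_le _ ?_
    filter_upwards [key] with x hx
    rw [enorm_eq_self]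
    refine hx.trans (le_of_eq ?_)
    simp [mul_comm]
  · have hqr : 0 < q.toReal := ENNReal.toReal_pos hq0 hqt
    have hqb : b * q.toReal = 1 := by
      rw [← hb, ENNReal.toReal_inv, inv_mul_cancel₀ hqr.ne']
    have hb' : 1 / q.toReal = b := by rw [one_div, ← ENNReal.toReal_inv, hb]
    rw [eLpNorm_eq_lintegral_rpow_enorm_toReal hq0 hqt, hnorm, hb']
    simp only [enorm_eq_self]
    have m1 : Measurable (Function.uncurry fun x y ↦ g y ^ p.toReal * k1 x y) :=
      ((hg.comp measurable_snd).pow_const _).mul hk1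
    have m2 : Measurable fun x ↦ ∫⁻ y, g y ^ p.toReal * k1 x y ∂ν := m1.lintegral_prod_right'
    have step : ∫⁻ x, (∫⁻ y, g y * k x y ∂ν) ^ q.toReal ∂μ ≤
        (A * P) * (P ^ (a - b) * A ^ (1 - a)) ^ q.toReal := by
      calc _ ≤ ∫⁻ x, (∫⁻ y, g y ^ p.toReal * k1 x y ∂ν) *
            (P ^ (a - b) * A ^ (1 - a)) ^ q.toReal ∂μ := by
            refine lintegral_mono_ae ?_
            filter_upwards [key] with x hx
            calc _ ≤ ((∫⁻ y, g y ^ p.toReal * k1 x y ∂ν) ^ b *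
                  (P ^ (a - b) * A ^ (1 - a))) ^ q.toReal := by
                  refine ENNReal.rpow_le_rpow (hx.trans_eq (mul_assoc _ _ _)) hqr.le
              _ = _ := by
                rw [ENNReal.mul_rpow_of_nonneg _ _ hqr.le, ← ENNReal.rpow_mul, hqb,
                  ENNReal.rpow_one]
        _ = (∫⁻ y, ∫⁻ x, g y ^ p.toReal * k1 x y ∂μ ∂ν) *
            (P ^ (a - b) * A ^ (1 - a)) ^ q.toReal := by
            rw [lintegral_mul_const _ m2, lintegral_lintegral_swap m1.aemeasurable]
        _ ≤ _ := by
            gcongr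
            rw [hP, ← lintegral_const_mul _ (hg.pow_const _)]
            refine lintegral_mono_ae ?_
            filter_upwards [h1] with y hy
            have m3 : Measurable fun x ↦ k1 x y := hk1.comp measurable_prodMk_right
            rw [lintegral_const_mul _ m3, mul_comm]
            gcongr
    calc _ ≤ ((A * P) * (P ^ (a - b) * A ^ (1 - a)) ^ q.toReal) ^ b := by gcongr
      _ = _ := by
        rw [ENNReal.mul_rpow_of_nonneg _ _ hb0, ENNReal.mul_rpow_of_nonneg _ _ hb0,
          ← ENNReal.rpow_mul, mul_comm q.toReal, hqb, ENNReal.rpow_one,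
          ENNReal.rpow_add_of_nonneg _ _ (sub_nonneg.2 ha1) hb0]
        have : P ^ a = P ^ b * P ^ (a - b) := by
          rw [← ENNReal.rpow_add_of_nonneg _ _ hb0 (sub_nonneg.2 hba), add_sub_cancel]
        rw [this]; ring

end Schur

section Riesz
variable {E : Type*} [NormedAddCommGroup E] [NormedSpace ℝ E] [FiniteDimensional ℝ E]
  [Nontrivial E] [MeasurableSpace E] [BorelSpace E] (μ : Measure E) [μ.IsAddHaarMeasure]

local notation "dim" => Module.finrank ℝ E

/-- The Riesz potential of a nonnegative function on `E`; the kernel is infinite on the diagonal,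
which is a null set. -/
noncomputable def riesz (lam : ℝ) (f : E → ℝ≥0∞) (x : E) : ℝ≥0∞ :=
  ∫⁻ y, f y * ‖x - y‖ₑ ^ (lam - dim) ∂μ

/-- Boundedness of the Riesz potential from `L^p(|x|^{tp} dx)` to `L^q(|x|^{sq} dx)`. -/
def RieszBounded (lam : ℝ) (p q : ℝ≥0∞) (t s : ℝ) : Prop :=
  ∃ C : ℝ≥0∞, C ≠ ∞ ∧ ∀ f : E → ℝ≥0∞, Measurable f →
    eLpNorm (fun x ↦ riesz μ lam f x * ‖x‖ₑ ^ s) q μ ≤ C * eLpNorm (fun x ↦ f x * ‖x‖ₑ ^ t) p μ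

lemma ae_ne (x : E) : ∀ᵐ y ∂μ, y ≠ x := by
  simp [ae_iff]

lemma measurable_enorm_rpow (e : ℝ) : Measurable fun y : E ↦ ‖y‖ₑ ^ e := by fun_prop

lemma measurable_kernel (e : ℝ) : Measurable fun z : E × E ↦ ‖z.1 - z.2‖ₑ ^ e := by fun_prop

/-- The Stein–Weiss inequality for `s < t`, in the full range `1 ≤ p ≤ q ≤ ∞`. -/
lemma rieszBounded_of_lt {lam : ℝ} (hlam : lam < dim) {p q : ℝ≥0∞} (hp : 1 ≤ p) (hpq : p ≤ q)
    {t s : ℝ} (hst : s < t)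
    (hsc : lam + dim * q⁻¹.toReal + s = dim * p⁻¹.toReal + t)
    (hα : dim * p⁻¹.toReal + t < dim) (hβ : 0 < dim * q⁻¹.toReal + s) :
    RieszBounded μ lam p q t s := by
  set a := p⁻¹.toReal with ha
  set b := q⁻¹.toReal with hb
  obtain ⟨ha0, ha1⟩ := toReal_inv_mem hp
  have hb0 : 0 ≤ b := ENNReal.toReal_nonneg
  have hd : (0 : ℝ) < dim := by exact_mod_cast Module.finrank_pos
  -- `1 / ρ` is the exponent for which the kernel, raised to it, is homogeneous of degree `-d`
  set ρ := 1 - a + b with hρ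
  have hdρ : dim * ρ = dim - lam + t - s := by rw [hρ]; linarith
  have hρ0 : 0 < ρ := by
    have : 0 < dim * ρ := by linarith
    exact pos_of_mul_pos_right this hd.le
  set r := ρ⁻¹ with hr
  have hr0 : 0 < r := inv_pos.2 hρ0
  have hρr : ρ * r = 1 := mul_inv_cancel₀ hρ0.ne'
  have hlt : ∀ {u v : ℝ}, u < v * ρ → u * r < v := fun {u v} h ↦ by
    rw [hr, ← div_eq_mul_inv, div_lt_iff₀ hρ0]; exact h
  have hgt : ∀ {u v : ℝ}, v * ρ < u → v < u * r := fun {u v} h ↦ by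
    rw [hr, ← div_eq_mul_inv, lt_div_iff₀ hρ0]; exact h
  obtain ⟨A3, hA3t, hA3⟩ := lintegral_two_powers μ (m := (dim - lam) * r)
    (v := (t + dim * b) * r) (hlt (by linarith)) (hlt (by rw [hdρ]; linarith))
    (by rw [← add_mul]; exact hgt (by rw [hdρ]; linarith))
  obtain ⟨A1, hA1t, hA1⟩ := lintegral_two_powers μ (m := (dim - lam) * r)
    (v := (dim * (1 - a) - s) * r) (hlt (by linarith)) (hlt (by rw [hdρ]; linarith))
    (by rw [← add_mul]; exact hgt (by rw [hdρ]; linarith))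
  set k1 : E → E → ℝ≥0∞ := fun x y ↦ ‖y - x‖ₑ ^ (-((dim - lam) * r)) *
    ‖x‖ₑ ^ (-((dim * (1 - a) - s) * r)) * ‖y‖ₑ ^ ((dim * (1 - a) - t) * r) with hk1
  set k3 : E → E → ℝ≥0∞ := fun x y ↦ ‖x - y‖ₑ ^ (-((dim - lam) * r)) *
    ‖y‖ₑ ^ (-((t + dim * b) * r)) * ‖x‖ₑ ^ ((s + dim * b) * r) with hk3
  set k : E → E → ℝ≥0∞ := fun x y ↦ ‖x - y‖ₑ ^ (lam - dim) * ‖x‖ₑ ^ s * ‖y‖ₑ ^ (-t) with hk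
  refine ⟨(A1 + A3) ^ (1 - a + b),
    ENNReal.rpow_ne_top_of_nonneg hρ0.le (by finiteness), fun f hf ↦ ?_⟩
  have hcongr : (fun x ↦ riesz μ lam f x * ‖x‖ₑ ^ s) =ᵐ[μ]
      fun x ↦ ∫⁻ y, (f y * ‖y‖ₑ ^ t) * k x y ∂μ := by
    refine Filter.Eventually.of_forall fun x ↦ ?_
    have hm : Measurable fun y ↦ f y * ‖x - y‖ₑ ^ (lam - dim) :=
      hf.mul ((measurable_kernel _).comp measurable_prodMk_left)
    simp only [riesz]
    rw [← lintegral_mul_const _ hm]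
    refine lintegral_congr_ae ?_
    filter_upwards [ae_ne μ 0] with y hy
    have : ‖y‖ₑ ^ t * ‖y‖ₑ ^ (-t) = 1 := by rw [enorm_rpow_mul hy]; simp
    calc _ = f y * ‖x - y‖ₑ ^ (lam - dim) * ‖x‖ₑ ^ s * (‖y‖ₑ ^ t * ‖y‖ₑ ^ (-t)) := by
          rw [this, mul_one]
      _ = _ := by rw [hk]; ring
  rw [eLpNorm_congr_ae hcongr]
  refine schur (k1 := k1) (k3 := k3) hp hpq ?_ ?_ ?_ ?_ ?_ (hf.mul (measurable_enorm_rpow _))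
  · simp only [hk1, Function.uncurry_def]; fun_prop
  · simp only [hk3, Function.uncurry_def]; fun_prop
  · filter_upwards [ae_ne μ 0] with x hx
    filter_upwards [ae_ne μ 0, ae_ne μ x] with y hy hxy
    have hxy' : x - y ≠ 0 := sub_ne_zero.2 hxy.symm
    have hsym : ‖y - x‖ₑ = ‖x - y‖ₑ := enorm_sub_rev y x
    rw [← ha, ← hb]
    simp only [hk, hk1, hk3, hsym]
    have h1a : 0 ≤ 1 - a := sub_nonneg.2 ha1
    simp only [ENNReal.mul_rpow_of_nonneg _ _ hb0, ENNReal.mul_rpow_of_nonneg _ _ h1a,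
      ← ENNReal.rpow_mul]
    apply le_of_eq
    have e1 : lam - dim = -((dim - lam) * r) * b + -((dim - lam) * r) * (1 - a) := by
      linear_combination (dim - lam) * hρr
    have e2 : s = -((dim * (1 - a) - s) * r) * b + (s + dim * b) * r * (1 - a) := by
      linear_combination -s * hρr
    have e3 : -t = (dim * (1 - a) - t) * r * b + -((t + dim * b) * r) * (1 - a) := by
      linear_combination t * hρr
    conv_lhs => rw [e1, e2, e3, ← enorm_rpow_mul hxy', ← enorm_rpow_mul hx, ← enorm_rpow_mul hy]
    ring
  · filter_upwards [ae_ne μ 0] with y hy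
    simp only [hk1]
    rw [lintegral_mul_const _ (by fun_prop)]
    calc _ ≤ A1 * ‖y‖ₑ ^ (dim - (dim - lam) * r - (dim * (1 - a) - s) * r) *
          ‖y‖ₑ ^ ((dim * (1 - a) - t) * r) := by gcongr; exact hA1 y hy
      _ = A1 := by
        rw [mul_assoc, enorm_rpow_mul hy]
        have : (dim - (dim - lam) * r - (dim * (1 - a) - s) * r + (dim * (1 - a) - t) * r : ℝ) = 0 := by
          linear_combination (-dim) * hρr + r * hdρ
        rw [this, ENNReal.rpow_zero, mul_one]
      _ ≤ _ := le_self_add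
  · filter_upwards [ae_ne μ 0] with x hx
    simp only [hk3]
    rw [lintegral_mul_const _ (by fun_prop)]
    calc _ ≤ A3 * ‖x‖ₑ ^ (dim - (dim - lam) * r - (t + dim * b) * r) *
          ‖x‖ₑ ^ ((s + dim * b) * r) := by gcongr; exact hA3 x hx
      _ = A3 := by
        rw [mul_assoc, enorm_rpow_mul hx]
        have : (dim - (dim - lam) * r - (t + dim * b) * r + (s + dim * b) * r : ℝ) = 0 := by
          linear_combination (-dim) * hρr + r * hdρ
        rw [this, ENNReal.rpow_zero, mul_one]
      _ ≤ _ := le_add_self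

end Riesz

end SteinWeiss

/-! ### The Hardy–Littlewood–Sobolev inequality -/

namespace SteinWeiss

open Set Metric

section Duality
variable {α : Type*} [MeasurableSpace α]

/-- The converse of Hölder's inequality. -/
lemma lintegral_rpow_le_of_duality {μ : Measure α} [SigmaFinite μ] {q r : ℝ}
    (hqr : q.HolderConjugate r) {G : α → ℝ≥0∞} {C : ℝ≥0∞}
    (h : ∀ g : α → ℝ≥0∞, Measurable g → ∫⁻ x, g x ^ r ∂μ ≤ 1 → ∫⁻ x, G x * g x ∂μ ≤ C) :
    (∫⁻ x, G x ^ q ∂μ) ^ q⁻¹ ≤ C := by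
  have hq := hqr.pos
  have hr := hqr.symm.pos
  have hsum : q⁻¹ + r⁻¹ = 1 := hqr.inv_add_inv_eq_one
  rw [← ENNReal.rpow_le_rpow_iff hq, ← ENNReal.rpow_mul, inv_mul_cancel₀ hq.ne', ENNReal.rpow_one]
  refine le_of_forall_lt fun L hL ↦ ?_
  rw [lintegral_eq_nnreal] at hL
  simp only [lt_iSup_iff] at hL
  obtain ⟨φ, hφ, hφL⟩ := hL
  rw [← SimpleFunc.lintegral_eq_lintegral] at hφL
  obtain ⟨g, hgφ, hgt, hgL⟩ := exists_lt_lintegral_simpleFunc_of_lt_lintegral (μ := μ)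
    (f := φ) (by simpa using hφL)
  refine hgL.trans_le ?_
  set I := ∫⁻ x, g x ∂μ with hI
  have hI0 : I ≠ 0 := (zero_le.trans_lt hgL).ne'
  have hle : ∀ x, (g x : ℝ≥0∞) ^ q⁻¹ ≤ G x := fun x ↦ by
    have : (g x : ℝ≥0∞) ≤ G x ^ q := le_trans (by exact_mod_cast hgφ x) (hφ x)
    calc (g x : ℝ≥0∞) ^ q⁻¹ ≤ (G x ^ q) ^ q⁻¹ := by gcongr
      _ = G x := by rw [← ENNReal.rpow_mul, mul_inv_cancel₀ hq.ne', ENNReal.rpow_one]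
  have hgm : Measurable fun x ↦ (g x : ℝ≥0∞) := g.measurable.coe_nnreal_ennreal
  have key := h (fun x ↦ (g x : ℝ≥0∞) ^ r⁻¹ * I ^ (-r⁻¹)) ((hgm.pow_const _).mul_const _) (by
    simp only [ENNReal.mul_rpow_of_nonneg _ _ hr.le, ← ENNReal.rpow_mul, neg_mul,
      inv_mul_cancel₀ hr.ne', ENNReal.rpow_one]
    rw [lintegral_mul_const _ hgm, ← hI, ENNReal.rpow_neg_one, ENNReal.mul_inv_cancel hI0 hgt.ne])
  have h2 : I ^ q⁻¹ ≤ C := by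
    refine le_trans ?_ key
    calc I ^ q⁻¹ = I * I ^ (-r⁻¹) := by
          conv_rhs => rw [← ENNReal.rpow_one I, ← ENNReal.rpow_mul, one_mul,
            ← ENNReal.rpow_add _ _ hI0 hgt.ne]
          congr 1; linarith
      _ = ∫⁻ x, g x * I ^ (-r⁻¹) ∂μ := by rw [lintegral_mul_const _ hgm]
      _ ≤ _ := by
        refine lintegral_mono fun x ↦ ?_
        calc (g x : ℝ≥0∞) * I ^ (-r⁻¹) = (g x : ℝ≥0∞) ^ q⁻¹ * (g x : ℝ≥0∞) ^ r⁻¹ * I ^ (-r⁻¹) := by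
              rw [← ENNReal.rpow_add_of_nonneg _ _ (by positivity) (by positivity), hsum,
                ENNReal.rpow_one]
          _ ≤ _ := by rw [mul_assoc]; gcongr; exact hle x
  calc I = (I ^ q⁻¹) ^ q := by rw [← ENNReal.rpow_mul, inv_mul_cancel₀ hq.ne', ENNReal.rpow_one]
    _ ≤ _ := by gcongr

end Duality

section HLS
variable {E : Type*} [NormedAddCommGroup E] [NormedSpace ℝ E] [FiniteDimensional ℝ E]
  [Nontrivial E] [MeasurableSpace E] [BorelSpace E] (μ : Measure E) [μ.IsAddHaarMeasure]

local notation "dim" => Module.finrank ℝ E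

/-- The Riesz potential of the part of a normalised `f` below height `M`, by splitting the integral
at the radius `R = M ^ (-p / d)`. -/
lemma riesz_truncated_le {lam p : ℝ} (hlam0 : 0 < lam) (hp : 1 < p) (hlp : lam * p < dim) :
    ∃ K : ℝ≥0∞, K ≠ ∞ ∧ ∀ f : E → ℝ≥0∞, Measurable f → ∫⁻ y, f y ^ p ∂μ ≤ 1 →
      ∀ M : ℝ≥0∞, M ≠ 0 → M ≠ ∞ → ∀ x,
        ∫⁻ y, {y | f y ≤ M}.indicator f y * ‖x - y‖ₑ ^ (lam - dim) ∂μ ≤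
          K * M ^ (1 - p * lam / dim) := by
  have hd : (0 : ℝ) < dim := by exact_mod_cast Module.finrank_pos
  obtain ⟨p', hpp⟩ : ∃ p', p.HolderConjugate p' := ⟨_, Real.HolderConjugate.conjExponent hp⟩
  have hp0 := hpp.pos
  have hp'0 := hpp.symm.pos
  have hsum : p⁻¹ + p'⁻¹ = 1 := hpp.inv_add_inv_eq_one
  have hppm : p + p' = p * p' := by field_simp at hsum; linarith
  obtain ⟨K1, hK1⟩ := setLIntegral_ball_rpow μ (e := lam - dim) (by linarith)
  obtain ⟨K2, hK2⟩ := setLIntegral_compl_ball_rpow μ (e := (lam - dim) * p') (by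
    have : lam * p * p' < dim * p' := mul_lt_mul_of_pos_right hlp hp'0
    have h2 : p * ((lam - dim) * p' + dim) < 0 := by nlinarith
    nlinarith [neg_of_mul_neg_right h2 hp0.le])
  refine ⟨K1 + (K2 : ℝ≥0∞) ^ p'⁻¹, by finiteness, fun f hf hf1 M hM0 hMt x ↦ ?_⟩
  set R : ℝ := M.toReal ^ (-(p / dim)) with hR
  have hM : 0 < M.toReal := ENNReal.toReal_pos hM0 hMt
  have hR0 : 0 < R := by positivity
  have hRM : ∀ e : ℝ, ENNReal.ofReal R ^ e = M ^ (-(p / dim) * e) := fun e ↦ by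
    rw [hR, ← ENNReal.ofReal_rpow_of_pos hM, ENNReal.ofReal_toReal hMt, ENNReal.rpow_mul]
  set k : E → ℝ≥0∞ := fun z ↦ ‖z‖ₑ ^ (lam - dim) with hk
  have hkm : Measurable k := measurable_enorm_rpow _
  have m1 : MeasurableSet {z : E | ‖z‖ < R} := measurableSet_lt measurable_norm measurable_const
  have m2 : MeasurableSet {z : E | R ≤ ‖z‖} := measurableSet_le measurable_const measurable_norm
  have hk1m : Measurable ({z : E | ‖z‖ < R}.indicator k) := hkm.indicator m1
  have hk2m : Measurable ({z : E | R ≤ ‖z‖}.indicator k) := hkm.indicator m2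
  have hk1x : Measurable fun y ↦ {z : E | ‖z‖ < R}.indicator k (x - y) :=
    hk1m.comp (measurable_id.const_sub x)
  have hk2x : Measurable fun y ↦ {z : E | R ≤ ‖z‖}.indicator k (x - y) :=
    hk2m.comp (measurable_id.const_sub x)
  have near : ∫⁻ y, M * {z : E | ‖z‖ < R}.indicator k (x - y) ∂μ ≤
      K1 * M ^ (1 - p * lam / dim) := by
    rw [lintegral_const_mul _ hk1x,
      lintegral_sub_left_eq_self (fun z ↦ {z : E | ‖z‖ < R}.indicator k z) x,
      lintegral_indicator m1]
    calc _ ≤ M * (K1 * ENNReal.ofReal R ^ (dim + (lam - dim))) := by gcongr; exact hK1 R hR0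
      _ = K1 * (M ^ (1 : ℝ) * M ^ (-(p / dim) * (dim + (lam - dim)))) := by
        rw [hRM, ENNReal.rpow_one]; ring
      _ = _ := by
        rw [← ENNReal.rpow_add _ _ hM0 hMt]
        congr 2; field_simp; ring
  have far : ∫⁻ y, f y * {z : E | R ≤ ‖z‖}.indicator k (x - y) ∂μ ≤
      (K2 : ℝ≥0∞) ^ p'⁻¹ * M ^ (1 - p * lam / dim) := by
    have hol := ENNReal.lintegral_mul_le_Lp_mul_Lq μ hpp hf.aemeasurable hk2x.aemeasurable
    simp only [Pi.mul_apply, one_div] at hol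
    refine hol.trans ?_
    have e1 : ∫⁻ y, {z : E | R ≤ ‖z‖}.indicator k (x - y) ^ p' ∂μ =
        ∫⁻ z in {z : E | R ≤ ‖z‖}, ‖z‖ₑ ^ ((lam - dim) * p') ∂μ := by
      rw [lintegral_sub_left_eq_self (fun z ↦ {z : E | R ≤ ‖z‖}.indicator k z ^ p') x,
        ← lintegral_indicator m2]
      congr with z
      by_cases hz : z ∈ {z : E | R ≤ ‖z‖}
      · simp only [indicator_of_mem hz, hk, ENNReal.rpow_mul]
      · simp only [indicator_of_notMem hz, ENNReal.zero_rpow_of_pos hp'0]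
    rw [e1]
    calc _ ≤ 1 ^ p⁻¹ * (K2 * ENNReal.ofReal R ^ (dim + (lam - dim) * p')) ^ p'⁻¹ := by
          gcongr; exact hK2 R hR0
      _ = _ := by
        rw [ENNReal.one_rpow, one_mul, ENNReal.mul_rpow_of_nonneg _ _ (by positivity),
          ← ENNReal.rpow_mul, hRM]
        congr 2
        field_simp
        linear_combination (-dim : ℝ) * hppm
  calc _ ≤ ∫⁻ y, (M * {z : E | ‖z‖ < R}.indicator k (x - y) +
        f y * {z : E | R ≤ ‖z‖}.indicator k (x - y)) ∂μ := by
        refine lintegral_mono fun y ↦ ?_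
        rcases lt_or_ge ‖x - y‖ R with h | h
        · rw [indicator_of_mem (show x - y ∈ {z : E | ‖z‖ < R} from h)]
          refine le_trans ?_ le_self_add
          refine mul_le_mul' ?_ le_rfl
          by_cases hy : y ∈ {y | f y ≤ M}
          · rw [indicator_of_mem hy]; exact hy
          · rw [indicator_of_notMem hy]; exact zero_le
        · rw [indicator_of_mem (show x - y ∈ {z : E | R ≤ ‖z‖} from h)]
          refine le_trans ?_ le_add_self
          exact mul_le_mul' (indicator_le_self _ _ _) le_rfl
    _ = _ := lintegral_add_left (hk1x.const_mul _) _
    _ ≤ _ := by rw [add_mul]; exact add_le_add near far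

/-- One half of the bilinear Hardy–Littlewood–Sobolev inequality: the part where
`f(y)^p ≤ h(x)^r`. -/
lemma bilinear_half {lam p r : ℝ} (hlam0 : 0 < lam) (hp : 1 < p) (hr : 1 < r)
    (hlp : lam * p < dim) (hpr : p⁻¹ + r⁻¹ = 1 + lam / dim) :
    ∃ K : ℝ≥0∞, K ≠ ∞ ∧ ∀ f h : E → ℝ≥0∞, Measurable f → Measurable h →
      ∫⁻ y, f y ^ p ∂μ ≤ 1 → ∫⁻ x, h x ^ r ∂μ ≤ 1 →
      ∫⁻ x, ∫⁻ y, h x * ({y | f y ≤ h x ^ (r / p)}.indicator f y * ‖x - y‖ₑ ^ (lam - dim)) ∂μ ∂μ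
        ≤ K := by
  have hd : (0 : ℝ) < dim := by exact_mod_cast Module.finrank_pos
  have hp0 : 0 < p := by linarith
  have hr0 : 0 < r := by linarith
  obtain ⟨K, hK, hKf⟩ := riesz_truncated_le μ hlam0 hp hlp
  refine ⟨K, hK, fun f h hf hh hf1 hh1 ↦ ?_⟩
  have htop : ∀ᵐ x ∂μ, h x ^ r < ∞ :=
    ae_lt_top (hh.pow_const _) (ne_top_of_le_ne_top ENNReal.one_ne_top hh1)
  calc _ ≤ ∫⁻ x, K * h x ^ r ∂μ := by
        refine lintegral_mono_ae ?_
        filter_upwards [htop] with x hx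
        have hxt : h x ≠ ∞ := fun h' ↦ by simp [h', hr0] at hx
        rcases eq_or_ne (h x) 0 with h0 | h0
        · simp [h0]
        rw [lintegral_const_mul' _ _ hxt]
        have h1 := hKf f hf hf1 (h x ^ (r / p)) (by simp [ENNReal.rpow_eq_zero_iff, h0, hxt])
          (by simp [ENNReal.rpow_eq_top_iff, h0, hxt]) x
        calc _ ≤ h x * (K * (h x ^ (r / p)) ^ (1 - p * lam / dim)) := by gcongr
          _ = K * (h x ^ (1 : ℝ) * h x ^ (r / p * (1 - p * lam / dim))) := by
            rw [← ENNReal.rpow_mul, ENNReal.rpow_one]; ring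
          _ = K * h x ^ r := by
            rw [← ENNReal.rpow_add _ _ h0 hxt]
            congr 2
            field_simp at hpr ⊢
            linear_combination hpr
    _ = K * ∫⁻ x, h x ^ r ∂μ := lintegral_const_mul _ (hh.pow_const _)
    _ ≤ K * 1 := by gcongr
    _ = K := mul_one K

/-- The bilinear Hardy–Littlewood–Sobolev inequality. -/
lemma bilinear_hls {lam p r : ℝ} (hlam0 : 0 < lam) (hp : 1 < p) (hr : 1 < r)
    (hlp : lam * p < dim) (hlr : lam * r < dim) (hpr : p⁻¹ + r⁻¹ = 1 + lam / dim) :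
    ∃ K : ℝ≥0∞, K ≠ ∞ ∧ ∀ f h : E → ℝ≥0∞, Measurable f → Measurable h →
      ∫⁻ y, f y ^ p ∂μ ≤ 1 → ∫⁻ x, h x ^ r ∂μ ≤ 1 → ∫⁻ x, riesz μ lam f x * h x ∂μ ≤ K := by
  have hp0 : 0 < p := by linarith
  have hr0 : 0 < r := by linarith
  obtain ⟨K1, hK1, h1⟩ := bilinear_half μ hlam0 hp hr hlp hpr
  obtain ⟨K2, hK2, h2⟩ := bilinear_half μ hlam0 hr hp hlr (by linarith)
  refine ⟨K1 + K2, by finiteness, fun f h hf hh hf1 hh1 ↦ ?_⟩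
  have hkm := measurable_kernel (E := E) (lam - dim)
  have hfm : Measurable fun z : E × E ↦ f z.2 := hf.comp measurable_snd
  have hhm : Measurable fun z : E × E ↦ h z.1 := hh.comp measurable_fst
  set F1 : E → E → ℝ≥0∞ := fun x y ↦
    h x * ({y | f y ≤ h x ^ (r / p)}.indicator f y * ‖x - y‖ₑ ^ (lam - dim)) with hF1
  set F2 : E → E → ℝ≥0∞ := fun x y ↦
    f y * ({x | h x ≤ f y ^ (p / r)}.indicator h x * ‖y - x‖ₑ ^ (lam - dim)) with hF2
  have mF1 : Measurable (Function.uncurry F1) := by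
    have : Function.uncurry F1 = fun z : E × E ↦ h z.1 *
        ({z : E × E | f z.2 ≤ h z.1 ^ (r / p)}.indicator (fun z ↦ f z.2) z *
          ‖z.1 - z.2‖ₑ ^ (lam - dim)) := rfl
    rw [this]
    exact hhm.mul ((hfm.indicator (measurableSet_le hfm (hhm.pow_const _))).mul hkm)
  have mF2 : Measurable (Function.uncurry F2) := by
    have : Function.uncurry F2 = fun z : E × E ↦ f z.2 *
        ({z : E × E | h z.1 ≤ f z.2 ^ (p / r)}.indicator (fun z ↦ h z.1) z *
          ‖z.2 - z.1‖ₑ ^ (lam - dim)) := rfl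
    rw [this]
    exact hfm.mul ((hhm.indicator (measurableSet_le hhm (hfm.pow_const _))).mul
      (hkm.comp measurable_swap))
  calc ∫⁻ x, riesz μ lam f x * h x ∂μ ≤ ∫⁻ x, ∫⁻ y, (F1 x y + F2 x y) ∂μ ∂μ := by
        refine lintegral_mono fun x ↦ ?_
        have hm : Measurable fun y ↦ f y * ‖x - y‖ₑ ^ (lam - dim) :=
          hf.mul (hkm.comp measurable_prodMk_left)
        simp only [riesz]
        rw [← lintegral_mul_const _ hm]
        refine lintegral_mono fun y ↦ ?_
        simp only [hF1, hF2]
        rcases le_total (f y ^ p) (h x ^ r) with hle | hle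
        · have : y ∈ {y | f y ≤ h x ^ (r / p)} := by
            have := ENNReal.rpow_le_rpow hle (inv_nonneg.2 hp0.le)
            rwa [← ENNReal.rpow_mul, mul_inv_cancel₀ hp0.ne', ENNReal.rpow_one,
              ← ENNReal.rpow_mul, ← div_eq_mul_inv] at this
          rw [indicator_of_mem this]
          exact le_trans (le_of_eq (by ring)) le_self_add
        · have : x ∈ {x | h x ≤ f y ^ (p / r)} := by
            have := ENNReal.rpow_le_rpow hle (inv_nonneg.2 hr0.le)
            rwa [← ENNReal.rpow_mul, mul_inv_cancel₀ hr0.ne', ENNReal.rpow_one,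
              ← ENNReal.rpow_mul, ← div_eq_mul_inv] at this
          rw [indicator_of_mem this, enorm_sub_rev y x]
          exact le_trans (le_of_eq (by ring)) le_add_self
    _ = ∫⁻ x, ((∫⁻ y, F1 x y ∂μ) + ∫⁻ y, F2 x y ∂μ) ∂μ := by
        congr with x
        exact lintegral_add_left (f := F1 x) (mF1.comp measurable_prodMk_left) _
    _ = (∫⁻ x, ∫⁻ y, F1 x y ∂μ ∂μ) + ∫⁻ x, ∫⁻ y, F2 x y ∂μ ∂μ :=
        lintegral_add_left (f := fun x ↦ ∫⁻ y, F1 x y ∂μ) mF1.lintegral_prod_right' _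
    _ = (∫⁻ x, ∫⁻ y, F1 x y ∂μ ∂μ) + ∫⁻ y, ∫⁻ x, F2 x y ∂μ ∂μ := by
        rw [lintegral_lintegral_swap mF2.aemeasurable]
    _ ≤ K1 + K2 := add_le_add (h1 f h hf hh hf1 hh1) (h2 h f hh hf hh1 hf1)

/-- The Hardy–Littlewood–Sobolev inequality. -/
lemma rieszBounded_hls {lam p q : ℝ} (hlam0 : 0 < lam) (hp : 1 < p) (hq : 1 < q)
    (hpq : lam / dim + q⁻¹ = p⁻¹) :
    RieszBounded μ lam (ENNReal.ofReal p) (ENNReal.ofReal q) 0 0 := by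
  have hd : (0 : ℝ) < dim := by exact_mod_cast Module.finrank_pos
  have hp0 : 0 < p := by linarith
  have hq0 : 0 < q := by linarith
  obtain ⟨r, hqr⟩ : ∃ r, q.HolderConjugate r := ⟨_, Real.HolderConjugate.conjExponent hq⟩
  have hsum : q⁻¹ + r⁻¹ = 1 := hqr.inv_add_inv_eq_one
  have hr : 1 < r := hqr.symm.lt
  have hr0 : 0 < r := hqr.symm.pos
  have hlp : lam / dim < p⁻¹ := by have := inv_pos.2 hq0; linarith
  have hlr : lam / dim < r⁻¹ := by
    have := inv_lt_one_of_one_lt₀ hp; linarith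
  obtain ⟨K, hK, hKf⟩ := bilinear_hls μ hlam0 hp hr
    (by rw [div_lt_iff₀ hd, inv_mul_eq_div, lt_div_iff₀ hp0] at hlp; exact hlp)
    (by rw [div_lt_iff₀ hd, inv_mul_eq_div, lt_div_iff₀ hr0] at hlr; exact hlr) (by linarith)
  refine ⟨K + 1, by finiteness, fun f hf ↦ ?_⟩
  simp only [ENNReal.rpow_zero, mul_one]
  have hpn : ENNReal.ofReal p ≠ 0 := by simpa using hp0
  have hqn : ENNReal.ofReal q ≠ 0 := by simpa using hq0
  rw [eLpNorm_eq_lintegral_rpow_enorm_toReal hpn ENNReal.ofReal_ne_top,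
    eLpNorm_eq_lintegral_rpow_enorm_toReal hqn ENNReal.ofReal_ne_top]
  simp only [enorm_eq_self, ENNReal.toReal_ofReal hp0.le, ENNReal.toReal_ofReal hq0.le, one_div]
  set N := (∫⁻ x, f x ^ p ∂μ) ^ p⁻¹ with hN
  rcases eq_or_ne N ∞ with hNt | hNt
  · rw [hNt, ENNReal.mul_top (by positivity)]; exact le_top
  rcases eq_or_ne N 0 with hN0 | hN0
  · have h0 : ∀ᵐ x ∂μ, f x = 0 := by
      rw [hN, ENNReal.rpow_eq_zero_iff_of_pos (inv_pos.2 hp0),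
        lintegral_eq_zero_iff (hf.pow_const _)] at hN0
      filter_upwards [hN0] with x hx
      simpa [ENNReal.rpow_eq_zero_iff_of_pos hp0] using hx
    have : riesz μ lam f = 0 := by
      ext x
      simp only [riesz, Pi.zero_apply]
      rw [← lintegral_zero (μ := μ)]
      refine lintegral_congr_ae ?_
      filter_upwards [h0] with y hy
      simp [hy]
    simp [this, hq0]
  · refine lintegral_rpow_le_of_duality hqr fun g hg hg1 ↦ ?_
    have hI : ∫⁻ y, (N⁻¹ * f y) ^ p ∂μ ≤ 1 := by
      simp only [ENNReal.mul_rpow_of_nonneg _ _ hp0.le]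
      rw [lintegral_const_mul _ (hf.pow_const _), ENNReal.inv_rpow, hN, ← ENNReal.rpow_mul,
        inv_mul_cancel₀ hp0.ne', ENNReal.rpow_one]
      exact ENNReal.inv_mul_le_one _
    have h1 := hKf _ g (hf.const_mul N⁻¹) hg hI hg1
    have e1 : ∀ x, riesz μ lam f x * g x = N * (riesz μ lam (fun y ↦ N⁻¹ * f y) x * g x) := by
      intro x
      simp only [riesz, mul_assoc]
      rw [lintegral_const_mul' _ _ (ENNReal.inv_ne_top.2 hN0), ← mul_assoc, ← mul_assoc,
        ENNReal.mul_inv_cancel hN0 hNt, one_mul]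
    simp only [e1]
    rw [lintegral_const_mul' _ _ hNt, mul_comm]
    gcongr
    exact h1.trans le_self_add

end HLS

end SteinWeiss

/-! ### The case `s = t` -/

namespace SteinWeiss

open Set Metric

section Equal
variable {E : Type*} [NormedAddCommGroup E] [NormedSpace ℝ E] [FiniteDimensional ℝ E]
  [Nontrivial E] [MeasurableSpace E] [BorelSpace E] (μ : Measure E) [μ.IsAddHaarMeasure]

local notation "dim" => Module.finrank ℝ E

lemma measurable_riesz (lam : ℝ) {f : E → ℝ≥0∞} (hf : Measurable f) :
    Measurable (riesz μ lam f) :=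
  Measurable.lintegral_prod_right' (f := fun z : E × E ↦ f z.2 * ‖z.1 - z.2‖ₑ ^ (lam - dim))
    ((hf.comp measurable_snd).mul (measurable_kernel _))

/-- Where `w` is dominated by `z = x - y`, a power of `w` can be traded for one of `z`. -/
lemma far_kernel {z w : E} (hz : z ≠ 0) {e ε : ℝ} (hε : 0 ≤ ε) (h : ‖w‖ ≤ 2 * ‖z‖) :
    ‖z‖ₑ ^ e * ‖w‖ₑ ^ ε ≤ 2 ^ ε * ‖z‖ₑ ^ (e + ε) := by
  have h1 : ‖w‖ₑ ≤ 2 * ‖z‖ₑ := by simpa using enorm_le_ofReal_mul (by norm_num) h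
  calc _ ≤ ‖z‖ₑ ^ e * (2 * ‖z‖ₑ) ^ ε := by gcongr
    _ = 2 ^ ε * (‖z‖ₑ ^ e * ‖z‖ₑ ^ ε) := by
      rw [ENNReal.mul_rpow_of_nonneg _ _ hε]; ring
    _ = _ := by rw [enorm_rpow_mul hz]

/-- The integrand of the weighted Riesz potential is dominated by two off-diagonal terms, in which
an extra power of `‖x - y‖` has been traded for a power of `‖x‖` or of `‖y‖`, and one diagonal
term, in which the weight has been moved from `x` to `y`. -/
lemma kernel_split {x y : E} (hx : x ≠ 0) (hy : y ≠ 0) (hxy : x ≠ y) {e ε s : ℝ} (hε : 0 ≤ ε) :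
    ‖x - y‖ₑ ^ e * ‖x‖ₑ ^ s ≤ (2 ^ ε + 2 ^ |s|) * (‖x - y‖ₑ ^ (e + ε) * ‖x‖ₑ ^ (s - ε) +
      ‖y‖ₑ ^ (-ε) * ‖x - y‖ₑ ^ (e + ε) * ‖x‖ₑ ^ s + ‖y‖ₑ ^ s * ‖x - y‖ₑ ^ e) := by
  have hz : x - y ≠ 0 := sub_ne_zero.2 hxy
  have tri1 : ‖x‖ ≤ ‖x - y‖ + ‖y‖ := by simpa using norm_add_le (x - y) y
  have tri2 : ‖y‖ ≤ ‖x - y‖ + ‖x‖ := by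
    have := norm_sub_le x (x - y); simp only [sub_sub_cancel] at this; linarith
  rcases lt_or_ge (2 * ‖y‖) ‖x‖ with h1 | h1
  · calc _ = ‖x - y‖ₑ ^ e * ‖x‖ₑ ^ ε * ‖x‖ₑ ^ (s - ε) := by
          rw [mul_assoc, enorm_rpow_mul hx, add_sub_cancel]
      _ ≤ 2 ^ ε * ‖x - y‖ₑ ^ (e + ε) * ‖x‖ₑ ^ (s - ε) :=
          mul_le_mul' (far_kernel hz hε (by linarith)) le_rfl
      _ ≤ _ := by
          rw [mul_assoc]
          exact mul_le_mul' le_self_add (le_self_add.trans le_self_add)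
  rcases lt_or_ge (2 * ‖x‖) ‖y‖ with h2 | h2
  · calc _ = (‖x - y‖ₑ ^ e * ‖y‖ₑ ^ ε) * (‖y‖ₑ ^ (-ε) * ‖x‖ₑ ^ s) := by
          rw [mul_assoc, ← mul_assoc (‖y‖ₑ ^ ε), enorm_rpow_mul hy]; simp
      _ ≤ 2 ^ ε * ‖x - y‖ₑ ^ (e + ε) * (‖y‖ₑ ^ (-ε) * ‖x‖ₑ ^ s) :=
          mul_le_mul' (far_kernel hz hε (by linarith)) le_rfl
      _ = 2 ^ ε * (‖y‖ₑ ^ (-ε) * ‖x - y‖ₑ ^ (e + ε) * ‖x‖ₑ ^ s) := by ring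
      _ ≤ _ := mul_le_mul' le_self_add (le_add_self.trans le_self_add)
  · have hc : ‖x‖ₑ ^ s ≤ 2 ^ |s| * ‖y‖ₑ ^ s :=
      rpow_le_of_comparable (by norm_num) (by norm_num) s
        (by simpa using enorm_le_ofReal_mul (by norm_num) h1)
        (by simpa using enorm_le_ofReal_mul (by norm_num) h2)
    calc _ ≤ ‖x - y‖ₑ ^ e * (2 ^ |s| * ‖y‖ₑ ^ s) := by gcongr
      _ = 2 ^ |s| * (‖y‖ₑ ^ s * ‖x - y‖ₑ ^ e) := by ring
      _ ≤ _ := mul_le_mul' le_add_self le_add_self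

/-- The Stein–Weiss inequality for `s = t`. -/
lemma rieszBounded_of_eq {lam : ℝ} (hlam0 : 0 < lam) (hlam : lam < dim) {p q : ℝ≥0∞}
    (hp : 1 < p) (hpt : p ≠ ∞) (hq : 1 < q) (hqt : q ≠ ∞) {s : ℝ}
    (hsc : lam + dim * q⁻¹.toReal = dim * p⁻¹.toReal)
    (hα : dim * p⁻¹.toReal + s < dim) (hβ : 0 < dim * q⁻¹.toReal + s) :
    RieszBounded μ lam p q s s := by
  have hd : (0 : ℝ) < dim := by exact_mod_cast Module.finrank_pos
  have hpq : p ≤ q := by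
    rw [← ENNReal.inv_le_inv, ← ENNReal.toReal_le_toReal (by simp; positivity) (by simp; positivity)]
    have : 0 < dim * (p⁻¹.toReal - q⁻¹.toReal) := by rw [mul_sub]; linarith
    linarith [pos_of_mul_pos_right this hd.le]
  -- `ε` is small enough for the triples `(lam + ε, s, s - ε)` and `(lam + ε, s + ε, s)` to satisfy the
  -- strict conditions of the off-diagonal case
  obtain ⟨ε, hε, hεm⟩ := exists_between (show (0 : ℝ) < min (dim - lam)
    (min (dim - (dim * p⁻¹.toReal + s)) (dim * q⁻¹.toReal + s)) by
      simp only [lt_min_iff]; refine ⟨?_, ?_, ?_⟩ <;> linarith)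
  simp only [lt_min_iff] at hεm
  obtain ⟨C1, hC1, h1⟩ := rieszBounded_of_lt μ (lam := lam + ε) (t := s) (s := s - ε)
    (by linarith) hp.le hpq (by linarith) (by linarith) (by linarith) (by linarith)
  obtain ⟨C2, hC2, h2⟩ := rieszBounded_of_lt μ (lam := lam + ε) (t := s + ε) (s := s)
    (by linarith) hp.le hpq (by linarith) (by linarith) (by linarith) (by linarith)
  have hpr : 1 < p.toReal := by
    simpa using (ENNReal.toReal_lt_toReal ENNReal.one_ne_top hpt).2 hp
  have hqr : 1 < q.toReal := by
    simpa using (ENNReal.toReal_lt_toReal ENNReal.one_ne_top hqt).2 hq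
  obtain ⟨C3, hC3, h3⟩ := rieszBounded_hls μ hlam0 hpr hqr (by
    rw [← ENNReal.toReal_inv, ← ENNReal.toReal_inv]
    field_simp
    linarith)
  rw [ENNReal.ofReal_toReal hpt, ENNReal.ofReal_toReal hqt] at h3
  refine ⟨(2 ^ ε + 2 ^ |s|) * (C1 + C2 + C3), by finiteness, fun f hf ↦ ?_⟩
  set f2 : E → ℝ≥0∞ := fun y ↦ f y * ‖y‖ₑ ^ (-ε) with hf2
  set f3 : E → ℝ≥0∞ := fun y ↦ f y * ‖y‖ₑ ^ s with hf3
  have mf2 : Measurable f2 := hf.mul (measurable_enorm_rpow _)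
  have mf3 : Measurable f3 := hf.mul (measurable_enorm_rpow _)
  set G1 : E → ℝ≥0∞ := fun x ↦ riesz μ (lam + ε) f x * ‖x‖ₑ ^ (s - ε) with hG1
  set G2 : E → ℝ≥0∞ := fun x ↦ riesz μ (lam + ε) f2 x * ‖x‖ₑ ^ s with hG2
  set G3 : E → ℝ≥0∞ := fun x ↦ riesz μ lam f3 x with hG3
  have mG1 : Measurable G1 := (measurable_riesz μ _ hf).mul (measurable_enorm_rpow _)
  have mG2 : Measurable G2 := (measurable_riesz μ _ mf2).mul (measurable_enorm_rpow _)
  have mG3 : Measurable G3 := measurable_riesz μ _ mf3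
  have b1 := h1 f hf
  have b2 : eLpNorm G2 q μ ≤ C2 * eLpNorm f3 p μ := by
    refine (h2 f2 mf2).trans_eq ?_
    congr 1
    refine eLpNorm_congr_ae ?_
    filter_upwards [ae_ne μ 0] with y hy
    simp only [hf2, hf3]
    rw [mul_assoc, enorm_rpow_mul hy]
    congr 2; ring
  have b3 := h3 f3 mf3
  simp only [ENNReal.rpow_zero, mul_one] at b3
  have pt : ∀ᵐ x ∂μ, ‖riesz μ lam f x * ‖x‖ₑ ^ s‖ₑ ≤ (2 ^ ε + 2 ^ |s|) * ‖(G1 + G2 + G3) x‖ₑ := by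
    filter_upwards [ae_ne μ 0] with x hx
    simp only [enorm_eq_self, Pi.add_apply, hG1, hG2, hG3, riesz]
    have hm : ∀ (e : ℝ) {g : E → ℝ≥0∞}, Measurable g → Measurable fun y ↦ g y * ‖x - y‖ₑ ^ e :=
      fun e g hg ↦ hg.mul ((measurable_kernel _).comp measurable_prodMk_left)
    rw [← lintegral_mul_const _ (hm _ hf), ← lintegral_mul_const _ (hm _ hf),
      ← lintegral_mul_const _ (hm _ mf2), ← lintegral_add_left ((hm _ hf).mul_const _),
      ← lintegral_add_right _ (hm _ mf3), ← lintegral_const_mul' _ _ (by finiteness)]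
    refine lintegral_mono_ae ?_
    filter_upwards [ae_ne μ 0, ae_ne μ x] with y hy hyx
    have e1 : lam + ε - dim = lam - dim + ε := by ring
    calc _ = f y * (‖x - y‖ₑ ^ (lam - dim) * ‖x‖ₑ ^ s) := by ring
      _ ≤ f y * ((2 ^ ε + 2 ^ |s|) * _) :=
        mul_le_mul' le_rfl (kernel_split hx hy hyx.symm (e := lam - dim) (s := s) hε.le)
      _ = _ := by rw [e1]; simp only [hf2, hf3]; ring
  calc _ ≤ (2 ^ ε + 2 ^ |s|) * eLpNorm (G1 + G2 + G3) q μ :=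
        eLpNorm_le_mul_eLpNorm_of_ae_le_mul'' q
          ((mG1.add mG2).add mG3).aestronglyMeasurable pt
    _ ≤ (2 ^ ε + 2 ^ |s|) * (eLpNorm G1 q μ + eLpNorm G2 q μ + eLpNorm G3 q μ) := by
        gcongr
        refine (eLpNorm_add_le (mG1.add mG2).aestronglyMeasurable mG3.aestronglyMeasurable
          hq.le).trans ?_
        gcongr
        exact eLpNorm_add_le mG1.aestronglyMeasurable mG2.aestronglyMeasurable hq.le
    _ ≤ (2 ^ ε + 2 ^ |s|) * (C1 * eLpNorm f3 p μ + C2 * eLpNorm f3 p μ + C3 * eLpNorm f3 p μ) := by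
        gcongr
    _ = _ := by ring

end Equal

end SteinWeiss

/-! ### Test functions on annuli -/

namespace SteinWeiss

open Set Metric

lemma rpow_anti {a b : ℝ≥0∞} {e : ℝ} (he : e ≤ 0) (h : a ≤ b) : b ^ e ≤ a ^ e := by
  simpa using rpow_le_of_nonpos (c := 1) le_rfl ENNReal.one_ne_top he (by simpa using h)

/-- Powers with positive exponent are unbounded. -/
lemma not_forall_rpow_le {c C : ℝ≥0∞} (hc : c ≠ 0) (hC : C ≠ ∞) {e : ℝ} (he : 0 < e) (l₀ : ℝ) :
    ¬ ∀ l : ℝ, l₀ ≤ l → c * ENNReal.ofReal l ^ e ≤ C := by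
  intro h
  set T : ℝ := (C / c).toReal + 1 with hT
  have hT0 : 0 < T := by positivity
  have h1 := h (max l₀ (T ^ e⁻¹)) (le_max_left _ _)
  have h2 : ENNReal.ofReal T ≤ ENNReal.ofReal (max l₀ (T ^ e⁻¹)) ^ e := by
    calc ENNReal.ofReal T = ENNReal.ofReal (T ^ e⁻¹) ^ e := by
          rw [← ENNReal.ofReal_rpow_of_pos hT0, ← ENNReal.rpow_mul, inv_mul_cancel₀ he.ne',
            ENNReal.rpow_one]
      _ ≤ _ := by gcongr; exact le_max_right _ _
  have h3 : ENNReal.ofReal T ≤ C / c := by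
    rw [ENNReal.le_div_iff_mul_le (Or.inl hc) (Or.inr hC), mul_comm]
    exact (mul_le_mul' le_rfl h2).trans h1
  have h4 : C / c ≠ ∞ := ENNReal.div_ne_top hC hc
  rw [ENNReal.ofReal_le_iff_le_toReal h4] at h3
  linarith

lemma le_of_forall_rpow_le {c C : ℝ≥0∞} (hc : c ≠ 0) (hC : C ≠ ∞) {a b l₀ : ℝ} (hl₀ : 0 < l₀)
    (h : ∀ l : ℝ, l₀ ≤ l → c * ENNReal.ofReal l ^ a ≤ C * ENNReal.ofReal l ^ b) : a ≤ b := by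
  by_contra! hab
  refine not_forall_rpow_le hc hC (sub_pos.2 hab) l₀ fun l hl ↦ ?_
  have hl0 : ENNReal.ofReal l ≠ 0 := by simpa using hl₀.trans_le hl
  calc c * ENNReal.ofReal l ^ (a - b) = c * ENNReal.ofReal l ^ a * ENNReal.ofReal l ^ (-b) := by
        rw [mul_assoc, ← ENNReal.rpow_add _ _ hl0 ENNReal.ofReal_ne_top, sub_eq_add_neg]
    _ ≤ C * ENNReal.ofReal l ^ b * ENNReal.ofReal l ^ (-b) := mul_le_mul' (h l hl) le_rfl
    _ = C := by
      rw [mul_assoc, ← ENNReal.rpow_add _ _ hl0 ENNReal.ofReal_ne_top, add_neg_cancel,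
        ENNReal.rpow_zero, mul_one]

section Necessity
variable {E : Type*} [NormedAddCommGroup E] [NormedSpace ℝ E] [FiniteDimensional ℝ E]
  [Nontrivial E] [MeasurableSpace E] [BorelSpace E] (μ : Measure E) [μ.IsAddHaarMeasure]

local notation "dim" => Module.finrank ℝ E

/-- The half-open annulus `a ≤ ‖x‖ < b`. -/
def ann (E : Type*) [NormedAddCommGroup E] (a b : ℝ) : Set E := {x | a ≤ ‖x‖ ∧ ‖x‖ < b}

lemma measurableSet_ann (a b : ℝ) : MeasurableSet (ann E a b) :=
  (measurableSet_le measurable_const measurable_norm).inter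
    (measurableSet_lt measurable_norm measurable_const)

lemma ne_zero_of_mem_ann {a b : ℝ} (ha : 0 < a) {x : E} (hx : x ∈ ann E a b) : x ≠ 0 :=
  norm_pos_iff.1 (ha.trans_le hx.1)

/-- The power `‖x‖ ^ e` cut off to an annulus. -/
noncomputable def annPow (E : Type*) [NormedAddCommGroup E] (a b e : ℝ) : E → ℝ≥0∞ :=
  (ann E a b).indicator fun x ↦ ‖x‖ₑ ^ e

lemma measurable_annPow (a b e : ℝ) : Measurable (annPow E a b e) :=
  (measurable_enorm_rpow e).indicator (measurableSet_ann a b)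

lemma log_ratio_pos {a b : ℝ} (ha : 0 < a) (hab : a < b) : 0 < sph μ * Real.log (b / a) :=
  mul_pos (sph_pos μ) (Real.log_pos ((one_lt_div ha).2 hab))

/-- The scale-invariant power has the same `L^q` norm on annuli of equal ratio. -/
lemma eLpNorm_annPow {q : ℝ≥0∞} (hq : 1 ≤ q) {a b : ℝ} (ha : 0 < a) (hab : a < b) :
    eLpNorm (annPow E a b (-(dim * q⁻¹.toReal))) q μ =
      ENNReal.ofReal (sph μ * Real.log (b / a)) ^ q⁻¹.toReal := by
  have hI := setLIntegral_annulus μ ha hab.le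
  rcases eq_or_ne q ∞ with rfl | hqt
  · simp only [ENNReal.inv_top, ENNReal.toReal_zero, mul_zero, neg_zero, ENNReal.rpow_zero]
    have hpos : μ (ann E a b) ≠ 0 := by
      intro h0
      rw [Measure.restrict_eq_zero.2 (show μ {x : E | a ≤ ‖x‖ ∧ ‖x‖ < b} = 0 from h0),
        lintegral_zero_measure] at hI
      have := log_ratio_pos μ ha hab
      exact (ENNReal.ofReal_pos.2 this).ne hI
    have : annPow E a b 0 = (ann E a b).indicator fun _ ↦ (1 : ℝ≥0∞) := by
      simp [annPow]
    rw [this, eLpNorm_exponent_top, eLpNormEssSup_indicator_const_eq _ _ hpos]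
    simp
  · have hq0 : q ≠ 0 := (zero_lt_one.trans_le hq).ne'
    have hqr : 0 < q.toReal := ENNReal.toReal_pos hq0 hqt
    have hm : MeasurableSet {x : E | a ≤ ‖x‖ ∧ ‖x‖ < b} := measurableSet_ann a b
    rw [eLpNorm_eq_lintegral_rpow_enorm_toReal hq0 hqt, one_div, ← ENNReal.toReal_inv, ← hI,
      ← lintegral_indicator hm]
    congr 2 with x
    simp only [enorm_eq_self, annPow]
    by_cases hx : x ∈ ann E a b
    · rw [indicator_of_mem hx]
      rw [indicator_of_mem (show x ∈ {x : E | a ≤ ‖x‖ ∧ ‖x‖ < b} from hx), ← ENNReal.rpow_mul,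
        ENNReal.toReal_inv]
      congr 1; field_simp
    · rw [indicator_of_notMem hx, ENNReal.zero_rpow_of_pos hqr]
      exact (indicator_of_notMem (show x ∉ {x : E | a ≤ ‖x‖ ∧ ‖x‖ < b} from hx) _).symm

/-- A multiple of the scale-invariant power is a lower bound in `L^q` too: the norm is at least that
of the power on the annulus. -/
lemma eLpNorm_ge_of_ann {q : ℝ≥0∞} (hq : 1 ≤ q) {a b : ℝ} (ha : 0 < a) (hab : a < b)
    {c : ℝ≥0∞} {g : E → ℝ≥0∞}
    (hg : ∀ x ∈ ann E a b, c * ‖x‖ₑ ^ (-(dim * q⁻¹.toReal)) ≤ g x) (hc : c ≠ ∞) :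
    c * ENNReal.ofReal (sph μ * Real.log (b / a)) ^ q⁻¹.toReal ≤
      eLpNorm ((ann E a b).indicator g) q μ := by
  rcases eq_or_ne c 0 with rfl | hc0
  · simp
  have hci : c⁻¹ ≠ ∞ := ENNReal.inv_ne_top.2 hc0
  have key : eLpNorm (annPow E a b (-(dim * q⁻¹.toReal))) q μ ≤
      c⁻¹.toNNReal * eLpNorm ((ann E a b).indicator g) q μ := by
    refine eLpNorm_le_nnreal_smul_eLpNorm_of_ae_le_mul' (.of_forall fun x ↦ ?_) q
    rw [ENNReal.coe_toNNReal hci]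
    simp only [enorm_eq_self, annPow]
    by_cases hx : x ∈ ann E a b
    · rw [indicator_of_mem hx, indicator_of_mem hx]
      calc _ = c⁻¹ * (c * ‖x‖ₑ ^ (-(dim * q⁻¹.toReal))) := by
            rw [← mul_assoc, ENNReal.inv_mul_cancel hc0 hc, one_mul]
        _ ≤ _ := by gcongr; exact hg x hx
    · simp [hx]
  rw [ENNReal.coe_toNNReal hci, eLpNorm_annPow μ hq ha hab] at key
  calc _ ≤ c * (c⁻¹ * eLpNorm ((ann E a b).indicator g) q μ) := by gcongr
    _ = _ := by rw [← mul_assoc, ENNReal.mul_inv_cancel hc0 hc, one_mul]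

/-- The kernel is at least `(2 R) ^ (lam - d)` for points in the ball of radius `R`. -/
lemma kernel_ge {lam : ℝ} (hlam : lam < dim) {x y w : E} (hx : ‖x‖ ≤ ‖w‖) (hy : ‖y‖ ≤ ‖w‖) :
    2 ^ (lam - dim) * ‖w‖ₑ ^ (lam - dim) ≤ ‖x - y‖ₑ ^ (lam - dim) := by
  have h : ‖x - y‖ₑ ≤ 2 * ‖w‖ₑ := by
    have : ‖x - y‖ ≤ 2 * ‖w‖ := (norm_sub_le x y).trans (by linarith)
    simpa using enorm_le_ofReal_mul (by norm_num) this
  rw [← ENNReal.mul_rpow_of_ne_top (by norm_num) (by finiteness)]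
  exact rpow_anti (by linarith) h

/-- A lower bound for the Riesz potential of a cut-off power by the contribution of a
sub-annulus. -/
lemma riesz_annPow_ge (lam : ℝ) {a b a' b' e : ℝ} (ha' : 0 < a') (hab' : a' < b') (haa : a ≤ a')
    (hbb : b' ≤ b) {x : E} {c : ℝ≥0∞}
    (h : ∀ y ∈ ann E a' b', c ≤ ‖y‖ₑ ^ (e + dim) * ‖x - y‖ₑ ^ (lam - dim)) :
    c * ENNReal.ofReal (sph μ * Real.log (b' / a')) ≤ riesz μ lam (annPow E a b e) x := by
  rw [← setLIntegral_annulus μ ha' hab'.le, ← lintegral_const_mul _ (measurable_enorm_rpow _),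
    riesz]
  refine le_trans ?_ (setLIntegral_le_lintegral (ann E a' b') _)
  refine setLIntegral_mono' (measurableSet_ann a' b') fun y hy ↦ ?_
  have hy' : y ∈ ann E a b := ⟨haa.trans hy.1, hy.2.trans_le hbb⟩
  have hy0 := ne_zero_of_mem_ann ha' hy
  rw [annPow, indicator_of_mem hy']
  calc c * ‖y‖ₑ ^ (-dim : ℝ) ≤ ‖y‖ₑ ^ (e + dim) * ‖x - y‖ₑ ^ (lam - dim) * ‖y‖ₑ ^ (-dim : ℝ) :=
        mul_le_mul' (h y hy) le_rfl
    _ = (‖y‖ₑ ^ (e + dim) * ‖y‖ₑ ^ (-dim : ℝ)) * ‖x - y‖ₑ ^ (lam - dim) := by ring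
    _ = _ := by rw [enorm_rpow_mul hy0, add_neg_cancel_right]

/-- The contribution of the points `‖x‖ / 2 ≤ ‖y‖ < ‖x‖`. -/
lemma riesz_annPow_near {lam : ℝ} (hlam : lam < dim) (e : ℝ) :
    ∃ c : ℝ≥0∞, c ≠ 0 ∧ c ≠ ∞ ∧ ∀ a b : ℝ, 0 < a → ∀ x : E, 2 * a ≤ ‖x‖ → ‖x‖ ≤ b →
      c * ‖x‖ₑ ^ (lam + e) ≤ riesz μ lam (annPow E a b e) x := by
  have hL : 0 < sph μ * Real.log 2 := mul_pos (sph_pos μ) (Real.log_pos (by norm_num))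
  have h2 : ∀ r : ℝ, (2 : ℝ≥0∞) ^ r ≠ 0 ∧ (2 : ℝ≥0∞) ^ r ≠ ∞ := fun r ↦
    ⟨by simp [ENNReal.rpow_eq_zero_iff], by simp [ENNReal.rpow_eq_top_iff]⟩
  refine ⟨2 ^ (-|e + dim|) * 2 ^ (lam - dim) * ENNReal.ofReal (sph μ * Real.log 2), ?_, ?_,
    fun a b ha x hax hxb ↦ ?_⟩
  · exact mul_ne_zero (mul_ne_zero (h2 _).1 (h2 _).1) (ENNReal.ofReal_pos.2 hL).ne'
  · exact ENNReal.mul_ne_top (ENNReal.mul_ne_top (h2 _).2 (h2 _).2) ENNReal.ofReal_ne_top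
  have hx0 : 0 < ‖x‖ := by linarith
  have hx : x ≠ 0 := norm_pos_iff.1 hx0
  have := riesz_annPow_ge μ lam (a := a) (b := b) (a' := ‖x‖ / 2) (b' := ‖x‖) (e := e) (x := x)
    (c := 2 ^ (-|e + dim|) * 2 ^ (lam - dim) * ‖x‖ₑ ^ (lam + e)) (by positivity) (by linarith)
    (by linarith) hxb (fun y hy ↦ by
      have hc : ‖x‖ₑ ^ (e + dim) ≤ 2 ^ |e + dim| * ‖y‖ₑ ^ (e + dim) :=
        rpow_le_of_comparable (by norm_num) (by norm_num) _
          (by simpa using enorm_le_ofReal_mul (c := 2) (by norm_num) (by linarith [hy.1]))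
          (by simpa using enorm_le_ofReal_mul (c := 2) (by norm_num) (by linarith [hy.2]))
      have hk := kernel_ge hlam (x := x) le_rfl hy.2.le
      calc _ = 2 ^ (-|e + dim|) * ‖x‖ₑ ^ (e + dim) * (2 ^ (lam - dim) * ‖x‖ₑ ^ (lam - dim)) := by
            have : lam + e = e + dim + (lam - dim) := by ring
            rw [this, ← enorm_rpow_mul hx]; ring
        _ ≤ 2 ^ (-|e + dim|) * (2 ^ |e + dim| * ‖y‖ₑ ^ (e + dim)) *
            ‖x - y‖ₑ ^ (lam - dim) := by gcongr
        _ = _ := by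
          rw [← mul_assoc (2 ^ (-|e + dim|)), ← ENNReal.rpow_add _ _ (by norm_num) (by norm_num),
            neg_add_cancel, ENNReal.rpow_zero, one_mul])
  have h3 : ‖x‖ / (‖x‖ / 2) = 2 := by field_simp
  rw [h3] at this
  refine le_trans (le_of_eq ?_) this
  ring

/-- The contribution of the points `a ≤ ‖y‖ < m ≤ ‖x‖`. -/
lemma riesz_annPow_inner {lam : ℝ} (hlam : lam < dim) {e : ℝ} (he : e + dim ≤ 0)
    {a m b : ℝ} (ha : 0 < a) (ham : a < m) (hmb : m ≤ b) {x : E} (hx : m ≤ ‖x‖) :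
    2 ^ (lam - dim) * ENNReal.ofReal (sph μ * Real.log (m / a)) * ‖x‖ₑ ^ (lam + e) ≤
      riesz μ lam (annPow E a b e) x := by
  have hx0 : x ≠ 0 := norm_pos_iff.1 (by linarith)
  have := riesz_annPow_ge μ lam (a := a) (b := b) (a' := a) (b' := m) (e := e) (x := x)
    (c := 2 ^ (lam - dim) * ‖x‖ₑ ^ (lam + e)) ha ham le_rfl hmb (fun y hy ↦ by
      have hyx : ‖y‖ ≤ ‖x‖ := hy.2.le.trans hx
      calc _ = ‖x‖ₑ ^ (e + dim) * (2 ^ (lam - dim) * ‖x‖ₑ ^ (lam - dim)) := by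
            have : lam + e = e + dim + (lam - dim) := by ring
            rw [this, ← enorm_rpow_mul hx0]; ring
        _ ≤ _ := by
          exact mul_le_mul' (rpow_anti he
            (by simpa using enorm_le_ofReal_mul (c := 1) (by norm_num) (by simpa using hyx)))
            (kernel_ge hlam le_rfl hyx))
  refine le_trans (le_of_eq ?_) this
  ring

/-- The contribution of the points `‖x‖ < m ≤ ‖y‖ < b`. -/
lemma riesz_annPow_outer {lam : ℝ} (hlam : lam < dim) {e : ℝ} (he : 0 ≤ lam + e)
    {a m b : ℝ} (ha : 0 < a) (ham : a ≤ m) (hmb : m < b) {x : E} (hx : ‖x‖ ≤ m) :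
    2 ^ (lam - dim) * ENNReal.ofReal (sph μ * Real.log (b / m)) * ‖x‖ₑ ^ (lam + e) ≤
      riesz μ lam (annPow E a b e) x := by
  have := riesz_annPow_ge μ lam (a := a) (b := b) (a' := m) (b' := b) (e := e) (x := x)
    (c := 2 ^ (lam - dim) * ‖x‖ₑ ^ (lam + e)) (by linarith) hmb ham le_rfl (fun y hy ↦ by
      have hyx : ‖x‖ ≤ ‖y‖ := hx.trans hy.1
      have hy0 : y ≠ 0 := ne_zero_of_mem_ann (by linarith) hy
      calc 2 ^ (lam - dim) * ‖x‖ₑ ^ (lam + e) ≤ 2 ^ (lam - dim) * ‖y‖ₑ ^ (lam + e) := by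
            gcongr
            simpa using enorm_le_ofReal_mul (c := 1) (by norm_num) (by simpa using hyx)
        _ = ‖y‖ₑ ^ (e + dim) * (2 ^ (lam - dim) * ‖y‖ₑ ^ (lam - dim)) := by
            have : lam + e = e + dim + (lam - dim) := by ring
            rw [this, ← enorm_rpow_mul hy0]; ring
        _ ≤ _ := by
          exact mul_le_mul' le_rfl (kernel_ge hlam hyx le_rfl))
  refine le_trans (le_of_eq ?_) this
  ring

/-- Boundedness tested only on functions supported in an annulus, with the potential restricted to
the same annulus. -/
def AnnulusBounded (lam : ℝ) (p q : ℝ≥0∞) (t s : ℝ) : Prop :=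
  ∃ C : ℝ≥0∞, C ≠ ∞ ∧ ∀ a b : ℝ, 0 < a → a < b → ∀ f : E → ℝ≥0∞, Measurable f →
    (∀ x ∉ ann E a b, f x = 0) →
    eLpNorm ((ann E a b).indicator fun x ↦ riesz μ lam f x * ‖x‖ₑ ^ s) q μ ≤
      C * eLpNorm (fun x ↦ f x * ‖x‖ₑ ^ t) p μ

lemma RieszBounded.annulusBounded {lam : ℝ} {p q : ℝ≥0∞} {t s : ℝ}
    (h : RieszBounded μ lam p q t s) : AnnulusBounded μ lam p q t s := by
  obtain ⟨C, hC, h⟩ := h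
  refine ⟨C, hC, fun a b _ _ f hf _ ↦ (eLpNorm_mono_enorm fun x ↦ ?_).trans (h f hf)⟩
  simp only [enorm_eq_self]
  exact indicator_le_self _ _ _

/-- A pointwise lower bound for the potential of the critical power on a sub-annulus compares
powers of the logarithms of the two ratios. -/
lemma AnnulusBounded.test {lam : ℝ} {p q : ℝ≥0∞} {t s : ℝ} (hp : 1 ≤ p) (hq : 1 ≤ q)
    (h : AnnulusBounded μ lam p q t s) :
    ∃ C : ℝ≥0∞, C ≠ ∞ ∧ ∀ a b a' b' : ℝ, ∀ c : ℝ≥0∞, 0 < a → a ≤ a' → a' < b' → b' ≤ b → c ≠ ∞ →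
      (∀ x ∈ ann E a' b', c * ‖x‖ₑ ^ (-(dim * q⁻¹.toReal)) ≤
        riesz μ lam (annPow E a b (-(t + dim * p⁻¹.toReal))) x * ‖x‖ₑ ^ s) →
      c * ENNReal.ofReal (sph μ * Real.log (b' / a')) ^ q⁻¹.toReal ≤
        C * ENNReal.ofReal (sph μ * Real.log (b / a)) ^ p⁻¹.toReal := by
  obtain ⟨C, hC, h⟩ := h
  refine ⟨C, hC, fun a b a' b' c ha haa hab' hbb hc hx ↦ ?_⟩
  have hab : a < b := by linarith
  have h1 := h a b ha hab _ (measurable_annPow a b (-(t + dim * p⁻¹.toReal)))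
    (fun x hx ↦ indicator_of_notMem hx _)
  have e1 : (fun x ↦ annPow E a b (-(t + dim * p⁻¹.toReal)) x * ‖x‖ₑ ^ t) =
      annPow E a b (-(dim * p⁻¹.toReal)) := by
    ext x
    simp only [annPow]
    by_cases hx : x ∈ ann E a b
    · rw [indicator_of_mem hx, indicator_of_mem hx, enorm_rpow_mul (ne_zero_of_mem_ann ha hx)]
      congr 1; ring
    · simp [hx]
  rw [e1, eLpNorm_annPow μ hp ha hab] at h1
  refine le_trans ?_ h1
  refine (eLpNorm_ge_of_ann μ hq (by linarith) hab' hx hc).trans (eLpNorm_mono_enorm fun x ↦ ?_)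
  simp only [enorm_eq_self]
  have hsub : ann E a' b' ⊆ ann E a b := fun x hx ↦ ⟨haa.trans hx.1, hx.2.trans_le hbb⟩
  exact indicator_le_indicator_of_subset hsub (fun _ ↦ zero_le) x

end Necessity

end SteinWeiss

/-! ### Necessity of the conditions -/

namespace SteinWeiss

open Set Metric

section Necessity2
variable {E : Type*} [NormedAddCommGroup E] [NormedSpace ℝ E] [FiniteDimensional ℝ E]
  [Nontrivial E] [MeasurableSpace E] [BorelSpace E] (μ : Measure E) [μ.IsAddHaarMeasure]

local notation "dim" => Module.finrank ℝ E

/-- Boundedness on annuli forces homogeneity: test on the annuli `R ≤ ‖x‖ < 4 R`. -/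
lemma AnnulusBounded.scaling {lam : ℝ} (hlam : lam < dim) {p q : ℝ≥0∞} {t s : ℝ} (hp : 1 ≤ p)
    (hq : 1 ≤ q) (h : AnnulusBounded μ lam p q t s) :
    lam + dim * q⁻¹.toReal + s = dim * p⁻¹.toReal + t := by
  obtain ⟨C, hC, h⟩ := AnnulusBounded.test μ hp hq h
  obtain ⟨c, hc0, hc, hnear⟩ := riesz_annPow_near μ hlam (-(t + dim * p⁻¹.toReal))
  set σ : ℝ := lam + dim * q⁻¹.toReal + s - (dim * p⁻¹.toReal + t) with hσ
  have hv : 0 ≤ q⁻¹.toReal := ENNReal.toReal_nonneg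
  have hu : 0 ≤ p⁻¹.toReal := ENNReal.toReal_nonneg
  have h4 : ∀ r : ℝ, (4 : ℝ≥0∞) ^ r ≠ 0 ∧ (4 : ℝ≥0∞) ^ r ≠ ∞ := fun r ↦
    ⟨by simp [ENNReal.rpow_eq_zero_iff], by simp [ENNReal.rpow_eq_top_iff]⟩
  have key : ∀ R : ℝ, 0 < R →
      (c * 4 ^ (-|σ|) * ENNReal.ofReal (sph μ * Real.log 2) ^ q⁻¹.toReal) * ENNReal.ofReal R ^ σ ≤
        C * ENNReal.ofReal (sph μ * Real.log 4) ^ p⁻¹.toReal := by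
    intro R hR
    have hRσ : ENNReal.ofReal R ^ σ ≠ ∞ := by
      simp [ENNReal.rpow_eq_top_iff, hR]
    have := h R (4 * R) (2 * R) (4 * R) (c * 4 ^ (-|σ|) * ENNReal.ofReal R ^ σ) hR (by linarith)
      (by linarith) le_rfl (ENNReal.mul_ne_top (ENNReal.mul_ne_top hc (h4 _).2) hRσ)
      (fun x hx ↦ by
        have hx0 : x ≠ 0 := ne_zero_of_mem_ann (by linarith) hx
        have hcmp : ENNReal.ofReal R ^ σ ≤ 4 ^ |σ| * ‖x‖ₑ ^ σ := by
          refine rpow_le_of_comparable (by norm_num) (by norm_num) _ ?_ ?_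
          · rw [← ofReal_norm, ← ENNReal.ofReal_ofNat 4, ← ENNReal.ofReal_mul (by norm_num)]
            exact ENNReal.ofReal_le_ofReal (by linarith [hx.1])
          · rw [← ofReal_norm, ← ENNReal.ofReal_ofNat 4, ← ENNReal.ofReal_mul (by norm_num)]
            exact ENNReal.ofReal_le_ofReal hx.2.le
        calc c * 4 ^ (-|σ|) * ENNReal.ofReal R ^ σ * ‖x‖ₑ ^ (-(dim * q⁻¹.toReal))
            ≤ c * 4 ^ (-|σ|) * (4 ^ |σ| * ‖x‖ₑ ^ σ) * ‖x‖ₑ ^ (-(dim * q⁻¹.toReal)) :=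
              mul_le_mul' (mul_le_mul' le_rfl hcmp) le_rfl
          _ = c * (4 ^ (-|σ|) * 4 ^ |σ|) * (‖x‖ₑ ^ σ * ‖x‖ₑ ^ (-(dim * q⁻¹.toReal))) := by ring
          _ = c * ‖x‖ₑ ^ (lam + -(t + dim * p⁻¹.toReal)) * ‖x‖ₑ ^ s := by
            rw [← ENNReal.rpow_add _ _ (by norm_num) (by norm_num), neg_add_cancel,
              ENNReal.rpow_zero, mul_one, enorm_rpow_mul hx0, mul_assoc, enorm_rpow_mul hx0]
            congr 2; rw [hσ]; ring
          _ ≤ _ := mul_le_mul' (hnear _ _ hR _ hx.1 hx.2.le) le_rfl)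
    have e1 : 4 * R / (2 * R) = 2 := by field_simp; norm_num
    have e2 : 4 * R / R = 4 := by field_simp
    rw [e1, e2] at this
    refine le_trans (le_of_eq ?_) this
    ring
  have hK : c * 4 ^ (-|σ|) * ENNReal.ofReal (sph μ * Real.log 2) ^ q⁻¹.toReal ≠ 0 := by
    refine mul_ne_zero (mul_ne_zero hc0 (h4 _).1) ?_
    have : 0 < sph μ * Real.log 2 := mul_pos (sph_pos μ) (Real.log_pos (by norm_num))
    simp [ENNReal.rpow_eq_zero_iff, this]
  have hC' : C * ENNReal.ofReal (sph μ * Real.log 4) ^ p⁻¹.toReal ≠ ∞ :=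
    ENNReal.mul_ne_top hC (ENNReal.rpow_ne_top_of_nonneg hu ENNReal.ofReal_ne_top)
  rcases lt_trichotomy σ 0 with hneg | h0 | hpos
  · refine absurd (fun l hl ↦ ?_) (not_forall_rpow_le hK hC' (neg_pos.2 hneg) 1)
    have hl0 : 0 < l := by linarith
    have := key l⁻¹ (inv_pos.2 hl0)
    rwa [ENNReal.ofReal_inv_of_pos hl0, ENNReal.inv_rpow, ← ENNReal.rpow_neg] at this
  · linarith
  · exact absurd (fun l hl ↦ key l (by linarith)) (not_forall_rpow_le hK hC' hpos 1)

/-- Radii in logarithmic scale. -/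
noncomputable def rad (l : ℝ) : ℝ := Real.exp (l / sph μ)

lemma rad_pos (l : ℝ) : 0 < rad μ l := Real.exp_pos _

lemma rad_lt {k l : ℝ} (h : k < l) : rad μ k < rad μ l :=
  Real.exp_lt_exp.2 (div_lt_div_of_pos_right h (sph_pos μ))

lemma rad_le {k l : ℝ} (h : k ≤ l) : rad μ k ≤ rad μ l :=
  Real.exp_le_exp.2 (div_le_div_of_nonneg_right h (sph_pos μ).le)

lemma log_rad (k l : ℝ) : sph μ * Real.log (rad μ l / rad μ k) = l - k := by
  have := (sph_pos μ).ne'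
  rw [rad, rad, ← Real.exp_sub, Real.log_exp]
  field_simp

/-- Comparison of logarithms on long annuli: if the potential of the critical power exceeds
`‖x‖ ^ (- d / q)` by a factor `l ^ δ` on half (in logarithmic scale) of an annulus of logarithmic
length `2 l`, then `δ + 1 / q ≤ 1 / p`. -/
lemma AnnulusBounded.log_test {lam : ℝ} {p q : ℝ≥0∞} {t s : ℝ} (hp : 1 ≤ p)
    (hq : 1 ≤ q) (h : AnnulusBounded μ lam p q t s) {δ i l₀ : ℝ} (hδ : 0 ≤ δ) (hi : 0 ≤ i)
    (hi1 : i ≤ 1) (hl₀ : 0 < l₀) {c : ℝ≥0∞} (hc0 : c ≠ 0) (hc : c ≠ ∞)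
    (hx : ∀ l, l₀ ≤ l → ∀ x ∈ ann E (rad μ (i * l)) (rad μ ((i + 1) * l)),
      c * ENNReal.ofReal l ^ δ * ‖x‖ₑ ^ (-(dim * q⁻¹.toReal)) ≤
        riesz μ lam (annPow E (rad μ 0) (rad μ (2 * l)) (-(t + dim * p⁻¹.toReal))) x * ‖x‖ₑ ^ s) :
    δ + q⁻¹.toReal ≤ p⁻¹.toReal := by
  obtain ⟨C, hC, h⟩ := AnnulusBounded.test μ hp hq h
  have hv : 0 ≤ q⁻¹.toReal := ENNReal.toReal_nonneg
  have hu : 0 ≤ p⁻¹.toReal := ENNReal.toReal_nonneg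
  refine le_of_forall_rpow_le (C := C * 2 ^ p⁻¹.toReal) hc0
    (ENNReal.mul_ne_top hC (ENNReal.rpow_ne_top_of_nonneg hu (by norm_num))) hl₀ fun l hl ↦ ?_
  have hl0 : 0 < l := by linarith
  have h1 := h (rad μ 0) (rad μ (2 * l)) (rad μ (i * l)) (rad μ ((i + 1) * l))
    (c * ENNReal.ofReal l ^ δ) (rad_pos μ 0) (rad_le μ (by positivity)) (rad_lt μ (by nlinarith))
    (rad_le μ (by nlinarith))
    (ENNReal.mul_ne_top hc (ENNReal.rpow_ne_top_of_nonneg hδ ENNReal.ofReal_ne_top)) (hx l hl)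
  rw [log_rad, log_rad, show (i + 1) * l - i * l = l by ring, sub_zero,
    ENNReal.ofReal_mul (by norm_num), ENNReal.mul_rpow_of_nonneg _ _ hu] at h1
  rw [ENNReal.rpow_add _ _ (by simpa using hl0) ENNReal.ofReal_ne_top, ← mul_assoc, mul_assoc C]
  simpa using h1

variable {lam : ℝ} {p q : ℝ≥0∞} {t s : ℝ}

/-- Boundedness forces `1 / q ≤ 1 / p`: test on long annuli, using only the contribution of the
points `y` of size comparable to `x`. -/
lemma AnnulusBounded.exponent_le (hlam : lam < dim) (hp : 1 ≤ p)
    (hq : 1 ≤ q) (h : AnnulusBounded μ lam p q t s) : q⁻¹.toReal ≤ p⁻¹.toReal := by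
  have hσ := AnnulusBounded.scaling μ hlam hp hq h
  obtain ⟨c, hc0, hc, hnear⟩ := riesz_annPow_near μ hlam (-(t + dim * p⁻¹.toReal))
  have := AnnulusBounded.log_test μ hp hq h (δ := 0) (i := 1) (l₀ := sph μ * Real.log 2) le_rfl
    zero_le_one le_rfl (mul_pos (sph_pos μ) (Real.log_pos (by norm_num))) hc0 hc
    (fun l hl x hx ↦ by
      have hx0 : x ≠ 0 := ne_zero_of_mem_ann (rad_pos μ _) hx
      have h2 : 2 * rad μ 0 ≤ rad μ (1 * l) := by
        rw [rad, rad, zero_div, Real.exp_zero, mul_one, one_mul,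
          ← Real.log_le_iff_le_exp (by norm_num), le_div_iff₀ (sph_pos μ), mul_comm]
        exact hl
      have := hnear (rad μ 0) (rad μ (2 * l)) (rad_pos μ 0) x (h2.trans hx.1)
        (by have := hx.2.le; rwa [show (1 + 1 : ℝ) * l = 2 * l by ring] at this)
      calc _ = c * ‖x‖ₑ ^ (lam + -(t + dim * p⁻¹.toReal)) * ‖x‖ₑ ^ s := by
            rw [ENNReal.rpow_zero, mul_one, mul_assoc, enorm_rpow_mul hx0]
            congr 2; linarith
        _ ≤ _ := mul_le_mul' this le_rfl)
  linarith

/-- If `t` is so large that the critical power is not integrable at the origin, its potential gains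
a logarithm from the points `y` closer to the origin than `x`. -/
lemma AnnulusBounded.inner (hlam : lam < dim) (hp : 1 ≤ p)
    (hq : 1 ≤ q) (h : AnnulusBounded μ lam p q t s) (hα : dim ≤ dim * p⁻¹.toReal + t) :
    1 + q⁻¹.toReal ≤ p⁻¹.toReal := by
  have hσ := AnnulusBounded.scaling μ hlam hp hq h
  refine AnnulusBounded.log_test μ hp hq h (δ := 1) (i := 1) (l₀ := 1) zero_le_one
    zero_le_one le_rfl one_pos (c := 2 ^ (lam - dim)) (by simp [ENNReal.rpow_eq_zero_iff])
    (by simp [ENNReal.rpow_eq_top_iff]) (fun l hl x hx ↦ ?_)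
  have hx0 : x ≠ 0 := ne_zero_of_mem_ann (rad_pos μ _) hx
  have := riesz_annPow_inner μ hlam (e := -(t + dim * p⁻¹.toReal)) (by linarith)
    (a := rad μ 0) (m := rad μ (1 * l)) (b := rad μ (2 * l)) (rad_pos μ 0)
    (rad_lt μ (by linarith)) (rad_le μ (by linarith)) hx.1
  rw [log_rad, sub_zero, one_mul] at this
  calc _ = 2 ^ (lam - dim) * ENNReal.ofReal l * ‖x‖ₑ ^ (lam + -(t + dim * p⁻¹.toReal)) *
        ‖x‖ₑ ^ s := by
        rw [ENNReal.rpow_one, mul_assoc _ (‖x‖ₑ ^ _), enorm_rpow_mul hx0]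
        congr 2; linarith
    _ ≤ _ := mul_le_mul' this le_rfl

/-- If `d / q + s ≤ 0`, then by homogeneity the integral defining the potential of the critical
power diverges at infinity, and the potential gains a logarithm from the points `y` farther from the
origin than `x`. -/
lemma AnnulusBounded.outer (hlam : lam < dim) (hp : 1 ≤ p)
    (hq : 1 ≤ q) (h : AnnulusBounded μ lam p q t s) (hβ : dim * q⁻¹.toReal + s ≤ 0) :
    1 + q⁻¹.toReal ≤ p⁻¹.toReal := by
  have hσ := AnnulusBounded.scaling μ hlam hp hq h
  refine AnnulusBounded.log_test μ hp hq h (δ := 1) (i := 0) (l₀ := 1) zero_le_one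
    le_rfl zero_le_one one_pos (c := 2 ^ (lam - dim)) (by simp [ENNReal.rpow_eq_zero_iff])
    (by simp [ENNReal.rpow_eq_top_iff]) (fun l hl x hx ↦ ?_)
  have hx0 : x ≠ 0 := ne_zero_of_mem_ann (rad_pos μ _) hx
  have := riesz_annPow_outer μ hlam (e := -(t + dim * p⁻¹.toReal)) (by linarith)
    (a := rad μ 0) (m := rad μ ((0 + 1) * l)) (b := rad μ (2 * l)) (rad_pos μ 0)
    (rad_le μ (by linarith)) (rad_lt μ (by linarith)) hx.2.le
  rw [log_rad, show 2 * l - (0 + 1) * l = l by ring] at this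
  calc _ = 2 ^ (lam - dim) * ENNReal.ofReal l * ‖x‖ₑ ^ (lam + -(t + dim * p⁻¹.toReal)) *
        ‖x‖ₑ ^ s := by
        rw [ENNReal.rpow_one, mul_assoc _ (‖x‖ₑ ^ _), enorm_rpow_mul hx0]
        congr 2; linarith
    _ ≤ _ := mul_le_mul' this le_rfl

/-- Far from the origin the weights are nearly constant, so weighted boundedness for translates of
`φ` is an unweighted estimate with the factor `‖z‖ ^ (t - s)`. -/
lemma RieszBounded.translate (h : RieszBounded μ lam p q t s) :
    ∃ C : ℝ≥0∞, C ≠ ∞ ∧ ∀ ρ : ℝ, 0 < ρ → ∀ z : E, 2 * ρ ≤ ‖z‖ → ∀ φ : E → ℝ≥0∞, Measurable φ →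
      (∀ y, ρ ≤ ‖y‖ → φ y = 0) →
      ‖z‖ₑ ^ s * eLpNorm ({x : E | ‖x‖ < ρ}.indicator (riesz μ lam φ)) q μ ≤
        C * ‖z‖ₑ ^ t * eLpNorm φ p μ := by
  obtain ⟨C, hC, h⟩ := h
  have h2 : ∀ r : ℝ, (2 : ℝ≥0∞) ^ r ≠ 0 ∧ (2 : ℝ≥0∞) ^ r ≠ ∞ := fun r ↦
    ⟨by simp [ENNReal.rpow_eq_zero_iff], by simp [ENNReal.rpow_eq_top_iff]⟩
  refine ⟨2 ^ |s| * C * 2 ^ |t|, ENNReal.mul_ne_top (ENNReal.mul_ne_top (h2 _).2 hC) (h2 _).2,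
    fun ρ hρ z hz φ hφ hφ0 ↦ ?_⟩
  have hz0 : z ≠ 0 := norm_pos_iff.1 (by linarith)
  have hcmp : ∀ x : E, ‖x - z‖ < ρ → ‖x‖ₑ ≤ 2 * ‖z‖ₑ ∧ ‖z‖ₑ ≤ 2 * ‖x‖ₑ := by
    intro x hx
    have h1 : ‖x‖ ≤ ‖x - z‖ + ‖z‖ := by simpa using norm_add_le (x - z) z
    have h2 : ‖z‖ ≤ ‖x - z‖ + ‖x‖ := by
      have := norm_add_le (z - x) x
      rwa [sub_add_cancel, norm_sub_rev] at this
    exact ⟨by simpa using enorm_le_ofReal_mul (c := 2) (by norm_num) (by linarith),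
      by simpa using enorm_le_ofReal_mul (c := 2) (by norm_num) (by linarith)⟩
  have hmp := measurePreserving_sub_right μ z
  have hr : ∀ x, riesz μ lam (fun y ↦ φ (y - z)) x = riesz μ lam φ (x - z) := by
    intro x
    simp only [riesz]
    rw [← lintegral_sub_right_eq_self (μ := μ) (fun y ↦ φ y * ‖x - z - y‖ₑ ^ (lam - dim)) z]
    simp
  have h1 := h (fun y ↦ φ (y - z)) (hφ.comp (measurable_sub_const z))
  have hR : eLpNorm (fun x ↦ φ (x - z) * ‖x‖ₑ ^ t) p μ ≤ 2 ^ |t| * ‖z‖ₑ ^ t * eLpNorm φ p μ := by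
    have hne : (2 : ℝ≥0∞) ^ |t| * ‖z‖ₑ ^ t ≠ ∞ :=
      ENNReal.mul_ne_top (h2 _).2 (enorm_rpow_ne_top hz0 _)
    have := eLpNorm_le_nnreal_smul_eLpNorm_of_ae_le_mul' (f := fun x ↦ φ (x - z) * ‖x‖ₑ ^ t)
      (g := fun x ↦ φ (x - z)) (μ := μ) (c := ((2 : ℝ≥0∞) ^ |t| * ‖z‖ₑ ^ t).toNNReal)
      (.of_forall fun x ↦ by
        rw [ENNReal.coe_toNNReal hne]
        simp only [enorm_eq_self]
        by_cases hx : ‖x - z‖ < ρ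
        · rw [mul_comm]
          exact mul_le_mul' (rpow_le_of_comparable (by norm_num) (by norm_num) _ (hcmp x hx).1
            (hcmp x hx).2) le_rfl
        · simp [hφ0 _ (not_lt.1 hx)]) p
    rw [ENNReal.smul_def, smul_eq_mul, ENNReal.coe_toNNReal hne] at this
    rw [← eLpNorm_comp_measurePreserving (p := p) hφ.aestronglyMeasurable hmp]
    exact this
  have hm : Measurable ({x : E | ‖x‖ < ρ}.indicator (riesz μ lam φ)) :=
    (measurable_riesz μ lam hφ).indicator (measurableSet_lt measurable_norm measurable_const)
  have hL : ‖z‖ₑ ^ s * eLpNorm ({x : E | ‖x‖ < ρ}.indicator (riesz μ lam φ)) q μ ≤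
      2 ^ |s| * eLpNorm (fun x ↦ riesz μ lam (fun y ↦ φ (y - z)) x * ‖x‖ₑ ^ s) q μ := by
    have hi : (‖z‖ₑ ^ s)⁻¹ ≠ ∞ := ENNReal.inv_ne_top.2 (enorm_rpow_ne_zero hz0 s)
    have hne : (2 : ℝ≥0∞) ^ |s| * (‖z‖ₑ ^ s)⁻¹ ≠ ∞ := ENNReal.mul_ne_top (h2 _).2 hi
    have := eLpNorm_le_nnreal_smul_eLpNorm_of_ae_le_mul'
      (f := {x : E | ‖x‖ < ρ}.indicator (riesz μ lam φ) ∘ fun x ↦ x - z)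
      (g := fun x ↦ riesz μ lam (fun y ↦ φ (y - z)) x * ‖x‖ₑ ^ s) (μ := μ)
      (c := ((2 : ℝ≥0∞) ^ |s| * (‖z‖ₑ ^ s)⁻¹).toNNReal)
      (.of_forall fun x ↦ by
        rw [ENNReal.coe_toNNReal hne]
        simp only [enorm_eq_self, Function.comp_apply, hr]
        by_cases hx : ‖x - z‖ < ρ
        · rw [indicator_of_mem (show x - z ∈ {x : E | ‖x‖ < ρ} from hx)]
          have hzx : ‖z‖ₑ ^ s ≤ 2 ^ |s| * ‖x‖ₑ ^ s :=
            rpow_le_of_comparable (by norm_num) (by norm_num) _ (hcmp x hx).2 (hcmp x hx).1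
          calc riesz μ lam φ (x - z)
              = riesz μ lam φ (x - z) * ((‖z‖ₑ ^ s)⁻¹ * ‖z‖ₑ ^ s) := by
                rw [ENNReal.inv_mul_cancel (enorm_rpow_ne_zero hz0 s) (enorm_rpow_ne_top hz0 s),
                  mul_one]
            _ ≤ riesz μ lam φ (x - z) * ((‖z‖ₑ ^ s)⁻¹ * (2 ^ |s| * ‖x‖ₑ ^ s)) :=
                mul_le_mul' le_rfl (mul_le_mul' le_rfl hzx)
            _ = _ := by ring
        · rw [indicator_of_notMem (show x - z ∉ {x : E | ‖x‖ < ρ} from hx)]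
          exact zero_le) q
    rw [ENNReal.smul_def, smul_eq_mul, ENNReal.coe_toNNReal hne, eLpNorm_comp_measurePreserving hm.aestronglyMeasurable hmp]
      at this
    calc _ ≤ ‖z‖ₑ ^ s * (2 ^ |s| * (‖z‖ₑ ^ s)⁻¹ *
          eLpNorm (fun x ↦ riesz μ lam (fun y ↦ φ (y - z)) x * ‖x‖ₑ ^ s) q μ) :=
          mul_le_mul' le_rfl this
      _ = (‖z‖ₑ ^ s * (‖z‖ₑ ^ s)⁻¹) * (2 ^ |s| *
          eLpNorm (fun x ↦ riesz μ lam (fun y ↦ φ (y - z)) x * ‖x‖ₑ ^ s) q μ) := by ring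
      _ = _ := by
        rw [ENNReal.mul_inv_cancel (enorm_rpow_ne_zero hz0 s) (enorm_rpow_ne_top hz0 s), one_mul]
  calc _ ≤ _ := hL
    _ ≤ 2 ^ |s| * (C * (2 ^ |t| * ‖z‖ₑ ^ t * eLpNorm φ p μ)) :=
      mul_le_mul' le_rfl (h1.trans (mul_le_mul' le_rfl hR))
    _ = _ := by ring

/-- Boundedness forces `s ≤ t`: test on a bump moved to infinity, using that its potential does not
vanish near it. -/
lemma RieszBounded.weight_le (hlam : lam < dim) (hp : 1 ≤ p)
    (hq : 1 ≤ q) (h : RieszBounded μ lam p q t s) : s ≤ t := by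
  obtain ⟨C, hC, h⟩ := RieszBounded.translate μ h
  set e : ℝ := -(dim * p⁻¹.toReal) with he
  obtain ⟨c, hc0, hc, hnear⟩ := riesz_annPow_near μ hlam e
  set φ := annPow E 1 4 e with hφ
  have hφ0 : ∀ y : E, 4 ≤ ‖y‖ → φ y = 0 := fun y hy ↦
    indicator_of_notMem (fun h ↦ absurd h.2 (not_lt.2 hy)) _
  set B := eLpNorm ({x : E | ‖x‖ < 4}.indicator (riesz μ lam φ)) q μ with hB
  have hA : eLpNorm φ p μ ≠ ∞ := by
    rw [hφ, he, eLpNorm_annPow μ hp one_pos (by norm_num)]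
    exact ENNReal.rpow_ne_top_of_nonneg ENNReal.toReal_nonneg ENNReal.ofReal_ne_top
  have hB0 : B ≠ 0 := by
    set r : ℝ := lam + e + dim * q⁻¹.toReal with hr
    set K : ℝ≥0∞ := c * (4 ^ |r|)⁻¹ with hK
    have h4 : (4 : ℝ≥0∞) ^ |r| ≠ 0 ∧ (4 : ℝ≥0∞) ^ |r| ≠ ∞ :=
      ⟨by simp [ENNReal.rpow_eq_zero_iff], by simp [ENNReal.rpow_eq_top_iff]⟩
    have hK0 : K ≠ 0 := mul_ne_zero hc0 (ENNReal.inv_ne_zero.2 h4.2)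
    have hKt : K ≠ ∞ := ENNReal.mul_ne_top hc (ENNReal.inv_ne_top.2 h4.1)
    have h1 := eLpNorm_ge_of_ann μ hq (a := 2) (b := 4) (by norm_num) (by norm_num) (c := K)
      (g := riesz μ lam φ) (fun x hx ↦ by
        have hx0 : x ≠ 0 := ne_zero_of_mem_ann (by norm_num) hx
        have hcmp : (1 : ℝ≥0∞) ^ r ≤ 4 ^ |r| * ‖x‖ₑ ^ r := by
          refine rpow_le_of_comparable (by norm_num) (by norm_num) _ ?_ ?_
          · rw [← ofReal_norm, ← ENNReal.ofReal_ofNat 4, ← ENNReal.ofReal_mul (by norm_num),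
              ENNReal.one_le_ofReal]
            linarith [hx.1]
          · rw [← ofReal_norm, mul_one, ← ENNReal.ofReal_ofNat 4]
            exact ENNReal.ofReal_le_ofReal hx.2.le
        rw [ENNReal.one_rpow] at hcmp
        calc K * ‖x‖ₑ ^ (-(dim * q⁻¹.toReal))
            ≤ K * (4 ^ |r| * ‖x‖ₑ ^ r) * ‖x‖ₑ ^ (-(dim * q⁻¹.toReal)) := by
              refine mul_le_mul' ?_ le_rfl
              simpa using mul_le_mul' (le_refl K) hcmp
          _ = c * ((4 ^ |r|)⁻¹ * 4 ^ |r|) * (‖x‖ₑ ^ r * ‖x‖ₑ ^ (-(dim * q⁻¹.toReal))) := by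
              rw [hK]; ring
          _ = c * ‖x‖ₑ ^ (lam + e) := by
            rw [ENNReal.inv_mul_cancel h4.1 h4.2, mul_one, enorm_rpow_mul hx0]
            congr 2; rw [hr]; ring
          _ ≤ _ := hnear 1 4 one_pos x (by linarith [hx.1]) hx.2.le) hKt
    have hsub : ann E 2 4 ⊆ {x : E | ‖x‖ < 4} := fun x hx ↦ hx.2
    have h2 : eLpNorm ((ann E 2 4).indicator (riesz μ lam φ)) q μ ≤ B :=
      eLpNorm_mono_enorm fun x ↦ by
        simp only [enorm_eq_self]
        exact indicator_le_indicator_of_subset hsub (fun _ ↦ zero_le) x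
    intro hB0
    rw [hB0] at h2
    have h3 := h1.trans h2
    have hL := log_ratio_pos μ (a := 2) (b := 4) (by norm_num) (by norm_num)
    have : ENNReal.ofReal (sph μ * Real.log (4 / 2)) ^ q⁻¹.toReal ≠ 0 := by
      simp only [ne_eq, ENNReal.rpow_eq_zero_iff, ENNReal.ofReal_eq_zero, not_le.2 hL,
        ENNReal.ofReal_ne_top, false_and, or_self, not_false_eq_true]
    exact (mul_ne_zero hK0 this) (le_antisymm h3 zero_le)
  refine le_of_forall_rpow_le (c := B) (C := C * eLpNorm φ p μ) hB0 (ENNReal.mul_ne_top hC hA)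
    (l₀ := 8) (by norm_num) fun l hl ↦ ?_
  obtain ⟨z, hz⟩ := exists_norm_eq E (show 0 ≤ l by linarith)
  have := h 4 (by norm_num) z (by linarith) φ (measurable_annPow _ _ _) hφ0
  rw [← ofReal_norm, hz] at this
  calc _ = ENNReal.ofReal l ^ s * B := mul_comm _ _
    _ ≤ _ := this
    _ = _ := by ring

/-- When the two weights agree, translations reduce to the unweighted case. -/
lemma RieszBounded.unweighted (h : RieszBounded μ lam p q s s) : AnnulusBounded μ lam p q 0 0 := by
  obtain ⟨C, hC, h⟩ := RieszBounded.translate μ h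
  refine ⟨C, hC, fun a b ha hab f hf hf0 ↦ ?_⟩
  obtain ⟨z, hz⟩ := exists_norm_eq E (show 0 ≤ 2 * b by linarith)
  have hz0 : z ≠ 0 := norm_pos_iff.1 (by linarith)
  have h1 := h b (by linarith) z hz.ge f hf
    (fun y hy ↦ hf0 y fun h ↦ absurd h.2 (not_lt.2 hy))
  have hsub : ann E a b ⊆ {x : E | ‖x‖ < b} := fun x hx ↦ hx.2
  have h2 : eLpNorm ((ann E a b).indicator (riesz μ lam f)) q μ ≤
      eLpNorm ({x : E | ‖x‖ < b}.indicator (riesz μ lam f)) q μ :=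
    eLpNorm_mono_enorm fun x ↦ by
      simp only [enorm_eq_self]
      exact indicator_le_indicator_of_subset hsub (fun _ ↦ zero_le) x
  simp only [ENNReal.rpow_zero, mul_one]
  refine h2.trans ?_
  rw [mul_comm C, mul_assoc] at h1
  exact (ENNReal.mul_le_mul_iff_right (enorm_rpow_ne_zero hz0 s) (enorm_rpow_ne_top hz0 s)).1 h1

/-- Necessary conditions for the weighted boundedness of the Riesz potential. -/
theorem RieszBounded.necessary (hlam : lam < dim) (hp : 1 ≤ p) (hq : 1 ≤ q)
    (h : RieszBounded μ lam p q t s) :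
    s ≤ t ∧ lam + dim * q⁻¹.toReal + s = dim * p⁻¹.toReal + t ∧ q⁻¹.toReal ≤ p⁻¹.toReal ∧
      0 < dim * q⁻¹.toReal + s ∧ dim * p⁻¹.toReal + t < dim ∧ (s = t → q ≠ ∞ ∧ p ≠ 1) := by
  have hA := RieszBounded.annulusBounded μ h
  have hst := RieszBounded.weight_le μ hlam hp hq h
  have hσ := AnnulusBounded.scaling μ hlam hp hq hA
  have hu := toReal_inv_mem hp
  have hv := toReal_inv_mem hq
  have hd : (0 : ℝ) < dim := by exact_mod_cast Module.finrank_pos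
  -- `1 + 1 / q ≤ 1 / p` means `p = 1`, `q = ∞`, which contradicts homogeneity as `lam < d`
  have hcontra : ∀ t' s' : ℝ, s' ≤ t' →
      lam + dim * q⁻¹.toReal + s' = dim * p⁻¹.toReal + t' → ¬ 1 + q⁻¹.toReal ≤ p⁻¹.toReal := by
    intro t' s' hst' hσ' h1
    have h2 : q⁻¹.toReal = 0 := le_antisymm (by linarith [hu.2]) hv.1
    have h3 : p⁻¹.toReal = 1 := le_antisymm hu.2 (by linarith)
    rw [h2, h3] at hσ'
    linarith
  refine ⟨hst, hσ, AnnulusBounded.exponent_le μ hlam hp hq hA, ?_, ?_, ?_⟩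
  · by_contra! hβ
    exact hcontra t s hst hσ (AnnulusBounded.outer μ hlam hp hq hA hβ)
  · by_contra! hα
    exact hcontra t s hst hσ (AnnulusBounded.inner μ hlam hp hq hA hα)
  · rintro rfl
    have hU := RieszBounded.unweighted μ h
    have hσ' := AnnulusBounded.scaling μ hlam hp hq hU
    constructor
    · rintro rfl
      exact hcontra 0 0 le_rfl hσ' (AnnulusBounded.outer μ hlam hp hq hU (by simp))
    · rintro rfl
      exact hcontra 0 0 le_rfl hσ' (AnnulusBounded.inner μ hlam hp hq hU (by simp))

end Necessity2

end SteinWeiss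

/-! ### Transfer to coordinates -/

namespace SteinWeiss

open Set Metric

section Transfer
variable {n : ℕ}

lemma rnorm_ofLp (x : EuclideanSpace ℝ (Fin n)) : rnorm (WithLp.ofLp x) = ‖x‖ := by
  simp [rnorm, EuclideanSpace.norm_eq]

lemma rnorm_ofLp_sub (x y : EuclideanSpace ℝ (Fin n)) :
    rnorm (WithLp.ofLp x - WithLp.ofLp y) = ‖x - y‖ := by
  rw [← rnorm_ofLp, WithLp.ofLp_sub]

lemma ofReal_norm_rpow {E : Type*} [NormedAddCommGroup E] {x : E} (hx : x ≠ 0) (e : ℝ) :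
    ENNReal.ofReal (‖x‖ ^ e) = ‖x‖ₑ ^ e := by
  rw [← ofReal_norm, ENNReal.ofReal_rpow_of_pos (norm_pos_iff.2 hx)]

variable [NeZero n]

/-- The two norms agree although the weights differ at the origin for `s < 0`, where the real power
is `0` and the extended one is `∞`: the origin is a null set. -/
lemma Pns_eq {q : ℝ≥0∞} (hq : 1 ≤ q) (s : ℝ) (f : (Fin n → ℝ) → ℝ≥0∞) :
    Pns n q s f = eLpNorm (fun x : EuclideanSpace ℝ (Fin n) ↦ f (WithLp.ofLp x) * ‖x‖ₑ ^ s) q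
      volume := by
  have hmp := EuclideanSpace.volume_preserving_symm_measurableEquiv_toLp (Fin n)
  set g : (Fin n → ℝ) → ℝ≥0∞ := fun x ↦ f x * ENNReal.ofReal (rnorm x ^ s) with hg
  have h0 : eLpNorm (fun x : EuclideanSpace ℝ (Fin n) ↦ f (WithLp.ofLp x) * ‖x‖ₑ ^ s) q volume =
      eLpNorm (g ∘ (MeasurableEquiv.toLp 2 (Fin n → ℝ)).symm) q volume := by
    refine eLpNorm_congr_ae ?_
    filter_upwards [ae_ne (volume : Measure (EuclideanSpace ℝ (Fin n))) 0] with x hx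
    simp only [hg, Function.comp_apply, MeasurableEquiv.coe_toLp_symm, rnorm_ofLp,
      ofReal_norm_rpow hx]
  have h1 : eLpNorm (g ∘ (MeasurableEquiv.toLp 2 (Fin n → ℝ)).symm) q volume =
      eLpNorm g q volume := by
    rw [← hmp.map_eq, (MeasurableEquiv.measurableEmbedding _).eLpNorm_map_measure]
  rw [h0, h1, Pns]
  have hq0 : q ≠ 0 := (zero_lt_one.trans_le hq).ne'
  split_ifs with hqt
  · subst hqt
    rw [eLpNorm_exponent_top, eLpNormEssSup]
    simp [hg]
  · rw [eLpNorm_eq_lintegral_rpow_enorm_toReal hq0 hqt]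
    simp [hg]

/-- The two kernels differ only on the diagonal, which is a null set. -/
lemma cRiesz_ofLp (lam : ℝ) (f : (Fin n → ℝ) → ℝ≥0∞) (x : EuclideanSpace ℝ (Fin n)) :
    cRiesz n lam f (WithLp.ofLp x) =
      riesz volume lam (fun y : EuclideanSpace ℝ (Fin n) ↦ f (WithLp.ofLp y)) x := by
  have hmp := EuclideanSpace.volume_preserving_symm_measurableEquiv_toLp (Fin n)
  rw [cRiesz, riesz, ← hmp.lintegral_comp_emb (MeasurableEquiv.measurableEmbedding _)]
  refine lintegral_congr_ae ?_
  filter_upwards [ae_ne (volume : Measure (EuclideanSpace ℝ (Fin n))) x] with y hy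
  rw [MeasurableEquiv.coe_toLp_symm, rnorm_ofLp_sub,
    ofReal_norm_rpow (sub_ne_zero.2 hy.symm), finrank_euclideanSpace_fin]

lemma bounded_iff (lam : ℝ) {p q : ℝ≥0∞} (hp : 1 ≤ p) (hq : 1 ≤ q) (t s : ℝ) :
    (∃ C : ℝ≥0, ∀ f : (Fin n → ℝ) → ℝ≥0∞, Measurable f →
      Pns n q s (cRiesz n lam f) ≤ (C : ℝ≥0∞) * Pns n p t f) ↔
    RieszBounded (volume : Measure (EuclideanSpace ℝ (Fin n))) lam p q t s := by
  simp only [Pns_eq hp, Pns_eq hq, cRiesz_ofLp]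
  constructor
  · rintro ⟨C, h⟩
    refine ⟨C, ENNReal.coe_ne_top, fun f hf ↦ ?_⟩
    exact h (fun y ↦ f (WithLp.toLp 2 y)) (hf.comp (MeasurableEquiv.toLp 2 (Fin n → ℝ)).measurable)
  · rintro ⟨C, hC, h⟩
    refine ⟨C.toNNReal, fun f hf ↦ ?_⟩
    rw [ENNReal.coe_toNNReal hC]
    exact h _ (hf.comp (MeasurableEquiv.toLp 2 (Fin n → ℝ)).symm.measurable)

/-- The condition `condC4`, multiplied by the dimension. -/
lemma condC4_iff (lam : ℝ) (p q : ℝ≥0∞) (t s : ℝ) :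
    condC4 n lam q p s t ↔
    s ≤ t ∧ lam + n * q⁻¹.toReal + s = n * p⁻¹.toReal + t ∧ q⁻¹.toReal ≤ p⁻¹.toReal ∧
      0 < n * q⁻¹.toReal + s ∧ n * p⁻¹.toReal + t < n ∧ (s = t → q ≠ ∞ ∧ p ≠ 1) := by
  have hn : (0 : ℝ) < n := by exact_mod_cast Nat.pos_of_ne_zero (NeZero.ne n)
  have e1 : lam / (n : ℝ) + iv q + s / (n : ℝ) = (lam + n * q⁻¹.toReal + s) / n := by
    rw [iv]; field_simp
  have e2 : ∀ (r : ℝ≥0∞) (a : ℝ), iv r + a / (n : ℝ) = (n * r⁻¹.toReal + a) / n := by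
    intro r a; rw [iv]; field_simp
  rw [condC4, e1, e2, e2, div_left_inj' hn.ne', div_pos_iff_of_pos_right hn, div_lt_one hn]
  rfl

end Transfer

end SteinWeiss

/-- sharp power-weighted boundedness of the Riesz potential. -/
theorem riesz_potential_power_weighted_sharp
    (n : ℕ) (hn : 1 ≤ n) (lam : ℝ) (hlam0 : 0 < lam) (hlamn : lam < n)
    (p q : ℝ≥0∞) (hp : 1 ≤ p) (hq : 1 ≤ q) (t s : ℝ) :
    (∃ C : ℝ≥0, ∀ f : (Fin n → ℝ) → ℝ≥0∞, Measurable f →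
        Pns n q s (cRiesz n lam f) ≤ C * Pns n p t f) ↔
      condC4 n lam q p s t := by
  have : NeZero n := ⟨by omega⟩
  rw [SteinWeiss.bounded_iff lam hp hq, SteinWeiss.condC4_iff]
  have hfr : Module.finrank ℝ (EuclideanSpace ℝ (Fin n)) = n := finrank_euclideanSpace_fin
  constructor
  · intro h
    have := SteinWeiss.RieszBounded.necessary _ (by rwa [hfr]) hp hq h
    rwa [hfr] at this
  · rintro ⟨hst, hsc, hvu, hβ, hα, hend⟩
    have hinv : q⁻¹ ≤ p⁻¹ := by
      refine (ENNReal.toReal_le_toReal ?_ ?_).1 hvu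
      · exact ENNReal.inv_ne_top.2 (zero_lt_one.trans_le hq).ne'
      · exact ENNReal.inv_ne_top.2 (zero_lt_one.trans_le hp).ne'
    rcases hst.lt_or_eq with hst | rfl
    · exact SteinWeiss.rieszBounded_of_lt _ (by rwa [hfr]) hp (ENNReal.inv_le_inv.1 hinv) hst
        (by rwa [hfr]) (by rwa [hfr]) (by rwa [hfr])
    · obtain ⟨hqt, hp1⟩ := hend rfl
      have hlt : (n : ℝ) * q⁻¹.toReal < n * p⁻¹.toReal := by linarith
      have hlt : q⁻¹.toReal < p⁻¹.toReal := lt_of_mul_lt_mul_left hlt (Nat.cast_nonneg n)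
      refine SteinWeiss.rieszBounded_of_eq _ hlam0 (by rwa [hfr]) (lt_of_le_of_ne hp hp1.symm) ?_
        (lt_of_le_of_ne hq ?_) hqt (by rw [hfr]; linarith) (by rwa [hfr]) (by rwa [hfr])
      · rintro rfl
        simp only [ENNReal.inv_top, ENNReal.toReal_zero] at hlt
        exact absurd hlt (not_lt.2 ENNReal.toReal_nonneg)
      · rintro rfl
        have := (SteinWeiss.toReal_inv_mem hp).2
        simp at hlt this
        linarith
end

section
/- Let n ≥ 1, 0 < q₁, q₂ ≤ ∞ and s₁, s₂ ∈ ℝ. Then the embedding l(q₁,s₁) ⊂ l(q₂,s₂) holds (i.e., there is a constant C with ‖a‖_{l(q₂,s₂)} ≤ C‖a‖_{l(q₁,s₁)} for all sequences a : ℤⁿ → ℂ) if and only if either (s₂ ≤ s₁ and 1/q₂ + s₂/n < 1/q₁ + s₁/n) or (s₂ = s₁ and q₂ = q₁). -/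
/-!
Write `b_k = a_k ⟨k⟩^{s₁}`, so that the embedding compares the `l^{q₂}` norm of
`b_k ⟨k⟩^{s₂ - s₁}` with the `l^{q₁}` norm of `b`. Everything rests on the fact that
`∑_{k ∈ ℤⁿ} ⟨k⟩^{-t}` converges for `t > n` (`tsum_ebr_ne_top`) and diverges for `t = n`
(`tsum_ebr_eq_top`).

*Sufficiency.* If `q₁ ≤ q₂`, then `s₂ ≤ s₁` alone is enough, because `⟨k⟩ ≥ 1` and
`l^{q₁} ⊂ l^{q₂}`. If `q₂ < q₁`, Hölder's inequality with `1/r = 1/q₂ - 1/q₁` applies, since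
`⟨k⟩^{s₂ - s₁}` lies in `l^r` exactly when `(s₁ - s₂) r > n`, which is the strict inequality
`1/q₂ + s₂/n < 1/q₁ + s₁/n`.

*Necessity.* Unit sequences give `s₂ ≤ s₁`. Suppose that the strict inequality fails. Then
`1/q₂ - 1/q₁ ≥ (s₁ - s₂)/n ≥ 0`, so either `q₁ = q₂` and `s₁ = s₂`, or `1/q₁ < 1/q₂`. In the
latter case, restrict `⟨k⟩^{-s₁ - n/q₁}` to a finite set `F`, and let `S_F = ∑_{k ∈ F} ⟨k⟩^{-n}`.
The embedding yields `S_F^{1/q₂} ≤ C S_F^{1/q₁}`, which bounds `S_F` uniformly in `F`,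
contradicting divergence.
-/

open scoped ENNReal NNReal BigOperators
open MeasureTheory

noncomputable section

/-- The Japanese bracket `⟨k⟩` as an extended nonnegative real; it takes values in `[1, ∞)`. -/
def ebr {n : ℕ} (k : Fin n → ℤ) : ℝ≥0∞ := ENNReal.ofReal (zbr k)

lemma one_le_zbr {n : ℕ} (k : Fin n → ℤ) : 1 ≤ zbr k := by
  unfold zbr
  rw [Real.one_le_sqrt]
  have : 0 ≤ ∑ i, ((k i : ℝ)) ^ 2 := Finset.sum_nonneg fun i _ => sq_nonneg _
  linarith

lemma zbr_pos {n : ℕ} (k : Fin n → ℤ) : 0 < zbr k := lt_of_lt_of_le one_pos (one_le_zbr k)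

lemma ofReal_zbr_rpow {n : ℕ} (k : Fin n → ℤ) (s : ℝ) :
    ENNReal.ofReal (zbr k ^ s) = ebr k ^ s :=
  (ENNReal.ofReal_rpow_of_pos (zbr_pos k)).symm

lemma one_le_ebr {n : ℕ} (k : Fin n → ℤ) : 1 ≤ ebr k :=
  ENNReal.one_le_ofReal.2 (one_le_zbr k)

lemma ebr_ne_zero {n : ℕ} (k : Fin n → ℤ) : ebr k ≠ 0 :=
  (lt_of_lt_of_le one_pos (one_le_ebr k)).ne'

lemma ebr_ne_top {n : ℕ} (k : Fin n → ℤ) : ebr k ≠ ∞ := ENNReal.ofReal_ne_top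

lemma ebr_rpow_add {n : ℕ} (k : Fin n → ℤ) (x y : ℝ) : ebr k ^ (x + y) = ebr k ^ x * ebr k ^ y :=
  ENNReal.rpow_add _ _ (ebr_ne_zero k) (ebr_ne_top k)

lemma lns_top (n : ℕ) (s : ℝ) (a : (Fin n → ℤ) → ℝ≥0∞) :
    lns n ∞ s a = ⨆ k, a k * ebr k ^ s := by
  simp [lns, ofReal_zbr_rpow]

lemma lns_fin (n : ℕ) {q : ℝ≥0∞} (hq : q ≠ ∞) (s : ℝ) (a : (Fin n → ℤ) → ℝ≥0∞) :
    lns n q s a = (∑' k, (a k * ebr k ^ s) ^ q.toReal) ^ (1 / q.toReal) := by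
  simp [lns, ofReal_zbr_rpow, hq]

lemma iv_eq (q : ℝ≥0∞) : iv q = 1 / q.toReal := by
  simp [iv, ENNReal.toReal_inv]

/-! ### Summability of powers of the bracket -/

/-- Tonelli for a product of one-variable functions on `ℤⁿ`. -/
lemma tsum_pi_prod (f : ℤ → ℝ≥0∞) (n : ℕ) :
    ∑' k : Fin n → ℤ, ∏ i, f (k i) = (∑' m, f m) ^ n := by
  induction n with
  | zero => simp
  | succ n ih =>
    rw [← (Fin.consEquiv (fun _ : Fin (n + 1) => ℤ)).tsum_eq, ENNReal.tsum_prod']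
    simp only [Fin.consEquiv_apply, Fin.prod_univ_succ, Fin.cons_zero, Fin.cons_succ]
    simp_rw [ENNReal.tsum_mul_left, ENNReal.tsum_mul_right]
    rw [ih, pow_succ']

lemma summable_one_add_sq_rpow {u : ℝ} (hu : 1 < 2 * u) :
    Summable fun m : ℤ => (1 + (m : ℝ) ^ 2) ^ (-u) := by
  have h0 : Summable (Pi.single (0 : ℤ) (1 : ℝ)) :=
    (hasSum_pi_single (0 : ℤ) (1 : ℝ)).summable
  refine Summable.of_nonneg_of_le (fun m => by positivity) (fun m => ?_)
    (h0.add (Real.summable_abs_int_rpow hu))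
  by_cases hm : m = 0
  · subst hm
    simp only [Int.cast_zero, Pi.single_eq_same]
    have : (0 : ℝ) ≤ |0| ^ (-(2 * u)) := by positivity
    simpa using this
  · rw [Pi.single_eq_of_ne hm, zero_add]
    have hm' : 0 < |(m : ℝ)| := by positivity
    have : |(m : ℝ)| ^ (-(2 * u)) = ((m : ℝ) ^ 2) ^ (-u) := by
      rw [← sq_abs, ← Real.rpow_natCast, ← Real.rpow_mul hm'.le]
      congr 1; push_cast; ring
    rw [this]
    exact Real.rpow_le_rpow_of_nonpos (by positivity) (by linarith) (by linarith)

/-- Convergence for `t > n`: since `⟨k⟩² ≥ 1 + kᵢ²` for every `i`, the summand is dominated by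
the product of the functions `(1 + kᵢ²)^{-t/(2n)}`. -/
lemma tsum_ebr_ne_top {n : ℕ} (hn : 1 ≤ n) {t : ℝ} (ht : (n : ℝ) < t) :
    ∑' k : Fin n → ℤ, ebr k ^ (-t) ≠ ∞ := by
  have hn0 : (0 : ℝ) < n := by exact_mod_cast hn
  have hu : 1 < 2 * (t / (2 * n)) := by
    rw [show 2 * (t / (2 * n)) = t / n by field_simp, one_lt_div hn0]
    exact ht
  set u := t / (2 * n) with hu_def
  have key : ∀ k : Fin n → ℤ, ebr k ^ (-t) ≤
      ∏ i, ENNReal.ofReal ((1 + ((k i : ℤ) : ℝ) ^ 2) ^ (-u)) := by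
    intro k
    rw [← ofReal_zbr_rpow, ← ENNReal.ofReal_prod_of_nonneg (fun i _ => by positivity)]
    apply ENNReal.ofReal_le_ofReal
    have hz : zbr k ^ (-t) = ∏ _i : Fin n, (zbr k ^ 2) ^ (-u) := by
      rw [Finset.prod_const, Finset.card_univ, Fintype.card_fin, ← Real.rpow_natCast (zbr k),
        ← Real.rpow_mul (zbr_pos k).le, ← Real.rpow_natCast, ← Real.rpow_mul (zbr_pos k).le]
      congr 1
      rw [hu_def]; push_cast; field_simp
    rw [hz]
    refine Finset.prod_le_prod (fun i _ => by positivity) (fun i _ => ?_)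
    refine Real.rpow_le_rpow_of_nonpos (by positivity) ?_ (by linarith)
    unfold zbr
    rw [Real.sq_sqrt (by positivity)]
    have := Finset.single_le_sum (f := fun i => ((k i : ℝ)) ^ 2) (fun i _ => sq_nonneg _)
      (Finset.mem_univ i)
    simpa using this
  refine ne_top_of_le_ne_top ?_ (ENNReal.tsum_le_tsum key)
  rw [tsum_pi_prod (fun m : ℤ => ENNReal.ofReal ((1 + (m : ℝ) ^ 2) ^ (-u)))]
  exact ENNReal.pow_ne_top (summable_one_add_sq_rpow hu).tsum_ofReal_ne_top

/-- Divergence at the critical exponent: the points `(m, k')` with `k' ∈ {0, …, m}^{n-1}` number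
`(m+1)^{n-1}` and satisfy `⟨k⟩ ≤ C (m+1)`, so their sum dominates a harmonic series. -/
lemma tsum_ebr_eq_top {n : ℕ} (hn : 1 ≤ n) :
    ∑' k : Fin n → ℤ, ebr k ^ (-(n : ℝ)) = ∞ := by
  obtain ⟨d, rfl⟩ : ∃ d, n = d + 1 := ⟨n - 1, by omega⟩
  set g : (Σ m : ℕ, (Fin d → Fin (m + 1))) → (Fin (d + 1) → ℤ) :=
    fun x => Fin.cons (x.1 : ℤ) (fun i => ((x.2 i : ℕ) : ℤ)) with hg
  have g_inj : Function.Injective g := by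
    rintro ⟨m, y⟩ ⟨m', y'⟩ h
    simp only [hg] at h
    obtain ⟨h1, h2⟩ := Fin.cons_inj.1 h
    obtain rfl : m = m' := by exact_mod_cast h1
    congr 1
    funext i
    have := congrFun h2 i
    exact Fin.ext (by exact_mod_cast this)
  set c : ℝ := Real.sqrt (d + 2) ^ (-((d : ℝ) + 1)) with hc
  have c_pos : 0 < c := by positivity
  have hle : ∀ x, ENNReal.ofReal (c * ((x.1 : ℝ) + 1) ^ (-((d : ℝ) + 1))) ≤
      ebr (g x) ^ (-((d + 1 : ℕ) : ℝ)) := by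
    rintro ⟨m, y⟩
    rw [← ofReal_zbr_rpow]
    apply ENNReal.ofReal_le_ofReal
    rw [hc, ← Real.mul_rpow (by positivity) (by positivity)]
    push_cast
    refine Real.rpow_le_rpow_of_nonpos (zbr_pos _) ?_ (by have := d.cast_nonneg (α := ℝ); linarith)
    rw [← Real.sqrt_sq (by positivity : (0 : ℝ) ≤ (m : ℝ) + 1),
      ← Real.sqrt_mul (by positivity)]
    apply Real.sqrt_le_sqrt
    simp only [hg, Fin.sum_univ_succ, Fin.cons_zero, Fin.cons_succ]
    have h1 : ∑ i : Fin d, ((((y i : ℕ) : ℤ) : ℝ)) ^ 2 ≤ ∑ _i : Fin d, ((m : ℝ) + 1) ^ 2 := by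
      refine Finset.sum_le_sum fun i _ => ?_
      have : ((y i : ℕ) : ℝ) ≤ (m : ℝ) + 1 := by exact_mod_cast (y i).2.le
      push_cast
      gcongr
    rw [Finset.sum_const, Finset.card_univ, Fintype.card_fin, nsmul_eq_mul] at h1
    have h2 : (0 : ℝ) ≤ m := m.cast_nonneg
    have h3 : (((m : ℤ) : ℝ)) = m := by push_cast; rfl
    rw [h3]
    nlinarith
  by_contra hfin
  have h1 : ∑' x, ENNReal.ofReal (c * (((x : Σ m : ℕ, (Fin d → Fin (m + 1))).1 : ℝ) + 1) ^
      (-((d : ℝ) + 1))) ≠ ∞ :=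
    ne_top_of_le_ne_top hfin ((ENNReal.tsum_le_tsum hle).trans
      (ENNReal.tsum_comp_le_tsum_of_injective g_inj
        (fun k => ebr k ^ (-((d + 1 : ℕ) : ℝ)))))
  rw [ENNReal.tsum_sigma'] at h1
  have h2 : ∀ m : ℕ, ∑' _y : Fin d → Fin (m + 1),
      ENNReal.ofReal (c * ((m : ℝ) + 1) ^ (-((d : ℝ) + 1))) =
      ENNReal.ofReal (c * (1 / ((m : ℝ) + 1))) := by
    intro m
    have hm : (0 : ℝ) < (m : ℝ) + 1 := by positivity
    rw [tsum_fintype, Finset.sum_const, Finset.card_univ, Fintype.card_fun, Fintype.card_fin,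
      Fintype.card_fin, nsmul_eq_mul, ← ENNReal.ofReal_natCast,
      ← ENNReal.ofReal_mul (by positivity)]
    congr 1
    push_cast
    rw [neg_add, Real.rpow_add hm, Real.rpow_neg hm.le, Real.rpow_neg hm.le, Real.rpow_natCast,
      Real.rpow_one]
    field_simp
  simp only [h2] at h1
  have h3 := ENNReal.summable_toReal h1
  have h4 : Summable fun m : ℕ => c * (1 / ((m : ℝ) + 1)) := by
    refine h3.congr fun m => ?_
    rw [ENNReal.toReal_ofReal (by positivity)]
  rw [summable_mul_left_iff c_pos.ne'] at h4
  exact Real.not_summable_one_div_natCast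
    ((summable_nat_add_iff 1).1 (by simpa using h4))

/-! ### Sufficiency -/

lemma lns_mono_weight (n : ℕ) (q : ℝ≥0∞) {s₁ s₂ : ℝ} (hs : s₂ ≤ s₁)
    (a : (Fin n → ℤ) → ℝ≥0∞) : lns n q s₂ a ≤ lns n q s₁ a := by
  have h : ∀ k, a k * ebr k ^ s₂ ≤ a k * ebr k ^ s₁ := fun k =>
    mul_le_mul_right (ENNReal.rpow_le_rpow_of_exponent_le (one_le_ebr k) hs) _
  by_cases hq : q = ∞
  · subst hq
    rw [lns_top, lns_top]
    exact iSup_mono h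
  · rw [lns_fin n hq, lns_fin n hq]
    refine ENNReal.rpow_le_rpow (ENNReal.tsum_le_tsum fun k => ?_) (by positivity)
    exact ENNReal.rpow_le_rpow (h k) (by positivity)

lemma le_lns (n : ℕ) {q : ℝ≥0∞} (hq : 0 < q) (s : ℝ) (a : (Fin n → ℤ) → ℝ≥0∞) (k : Fin n → ℤ) :
    a k * ebr k ^ s ≤ lns n q s a := by
  by_cases hqt : q = ∞
  · subst hqt
    rw [lns_top]
    exact le_iSup (fun k => a k * ebr k ^ s) k
  · have hp : 0 < q.toReal := ENNReal.toReal_pos hq.ne' hqt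
    rw [lns_fin n hqt, one_div, ENNReal.le_rpow_inv_iff hp]
    exact ENNReal.le_tsum k

/-- `‖b‖_{q₂}^{q₂} ≤ ∑ b_k^{q₁} (sup b)^{q₂ - q₁} ≤ ‖b‖_{q₁}^{q₂}`. -/
lemma lns_mono_exp (n : ℕ) {q₁ q₂ : ℝ≥0∞} (hq₁ : 0 < q₁) (hq : q₁ ≤ q₂) (s : ℝ)
    (a : (Fin n → ℤ) → ℝ≥0∞) : lns n q₂ s a ≤ lns n q₁ s a := by
  by_cases h2 : q₂ = ∞
  · subst h2
    rw [lns_top]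
    exact iSup_le fun k => le_lns n hq₁ s a k
  have h1 : q₁ ≠ ∞ := ne_top_of_le_ne_top h2 hq
  have hp1 : 0 < q₁.toReal := ENNReal.toReal_pos hq₁.ne' h1
  have hp : q₁.toReal ≤ q₂.toReal := ENNReal.toReal_mono h2 hq
  have hp2 : 0 < q₂.toReal := hp1.trans_le hp
  set N := lns n q₁ s a with hN
  have hNsum : ∑' k, (a k * ebr k ^ s) ^ q₁.toReal = N ^ q₁.toReal := by
    rw [hN, lns_fin n h1, ← ENNReal.rpow_mul, one_div_mul_cancel hp1.ne', ENNReal.rpow_one]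
  rw [lns_fin n h2, one_div, ENNReal.rpow_inv_le_iff hp2]
  calc ∑' k, (a k * ebr k ^ s) ^ q₂.toReal
      ≤ ∑' k, (a k * ebr k ^ s) ^ q₁.toReal * N ^ (q₂.toReal - q₁.toReal) := by
        refine ENNReal.tsum_le_tsum fun k => ?_
        conv_lhs => rw [← add_sub_cancel q₁.toReal q₂.toReal]
        rw [ENNReal.rpow_add_of_nonneg _ _ hp1.le (sub_nonneg.2 hp)]
        gcongr
        exact le_lns n hq₁ s a k
    _ = N ^ q₂.toReal := by
        rw [ENNReal.tsum_mul_right, hNsum, ← ENNReal.rpow_add_of_nonneg _ _ hp1.le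
          (sub_nonneg.2 hp), add_sub_cancel]

/-- Hölder's inequality against the weight `⟨k⟩^{s₂ - s₁}`, which lies in `l^r` for
`1/r = 1/q₂ - 1/q₁`. -/
lemma embedding_of_lt {n : ℕ} (hn : 1 ≤ n) {q₁ q₂ : ℝ≥0∞} (hq₂ : 0 < q₂) (hq : q₂ < q₁)
    {s₁ s₂ : ℝ} (h : iv q₂ + s₂ / (n : ℝ) < iv q₁ + s₁ / (n : ℝ)) :
    ∃ C : ℝ≥0, ∀ a : (Fin n → ℤ) → ℝ≥0∞, lns n q₂ s₂ a ≤ C * lns n q₁ s₁ a := by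
  have hn0 : (0 : ℝ) < n := by exact_mod_cast hn
  have h2 : q₂ ≠ ∞ := ne_top_of_lt hq
  have hp2 : 0 < q₂.toReal := ENNReal.toReal_pos hq₂.ne' h2
  have hsplit : ∀ (a : (Fin n → ℤ) → ℝ≥0∞) k,
      a k * ebr k ^ s₂ = (a k * ebr k ^ s₁) * ebr k ^ (s₂ - s₁) := by
    intro a k
    rw [mul_assoc, ← ebr_rpow_add, add_sub_cancel]
  have hfin : ∀ r : ℝ, 0 < r → 1 / r = iv q₂ - iv q₁ →
      (∑' k : Fin n → ℤ, (ebr k ^ (s₂ - s₁)) ^ r) ^ (1 / r) ≠ ∞ := by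
    intro r hr hr'
    refine ENNReal.rpow_ne_top_of_nonneg (by positivity) ?_
    have ht : (n : ℝ) < (s₁ - s₂) * r := by
      have h3 : 1 / r < (s₁ - s₂) / n := by rw [hr', sub_div]; linarith
      rw [div_lt_div_iff₀ hr hn0] at h3
      linarith
    have := tsum_ebr_ne_top hn ht
    simpa only [← ENNReal.rpow_mul, ← neg_mul, neg_sub] using this
  by_cases h1 : q₁ = ∞
  · have hK := hfin q₂.toReal hp2 (by rw [iv_eq, iv_eq, h1]; simp)
    refine ⟨((∑' k : Fin n → ℤ, (ebr k ^ (s₂ - s₁)) ^ q₂.toReal) ^ (1 / q₂.toReal)).toNNReal,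
      fun a => ?_⟩
    rw [ENNReal.coe_toNNReal hK, lns_fin n h2]
    set N := lns n q₁ s₁ a
    calc (∑' k, (a k * ebr k ^ s₂) ^ q₂.toReal) ^ (1 / q₂.toReal)
        ≤ (∑' k, (ebr k ^ (s₂ - s₁)) ^ q₂.toReal * N ^ q₂.toReal) ^ (1 / q₂.toReal) := by
          refine ENNReal.rpow_le_rpow (ENNReal.tsum_le_tsum fun k => ?_) (by positivity)
          rw [hsplit, ENNReal.mul_rpow_of_nonneg _ _ hp2.le, mul_comm]
          gcongr
          exact le_lns n (hq₂.trans hq) s₁ a k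
      _ = _ := by
          rw [ENNReal.tsum_mul_right, ENNReal.mul_rpow_of_nonneg _ _ (by positivity),
            ← ENNReal.rpow_mul, mul_one_div_cancel hp2.ne', ENNReal.rpow_one]
  · have hp : q₂.toReal < q₁.toReal := (ENNReal.toReal_lt_toReal h2 h1).2 hq
    have hd : 0 < iv q₂ - iv q₁ := by
      rw [iv_eq, iv_eq, sub_pos]
      exact one_div_lt_one_div_of_lt hp2 hp
    set r : ℝ := 1 / (iv q₂ - iv q₁) with hr_def
    have hr : 0 < r := by positivity
    have hr' : 1 / r = iv q₂ - iv q₁ := by rw [hr_def, one_div_one_div]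
    have hK := hfin r hr hr'
    refine ⟨((∑' k : Fin n → ℤ, (ebr k ^ (s₂ - s₁)) ^ r) ^ (1 / r)).toNNReal, fun a => ?_⟩
    rw [ENNReal.coe_toNNReal hK, lns_fin n h2, lns_fin n h1, mul_comm]
    have hH := ENNReal.lintegral_Lp_mul_le_Lq_mul_Lr (p := q₂.toReal) (q := q₁.toReal) (r := r)
      hp2 hp (by rw [hr', iv_eq, iv_eq]; ring) (Measure.count : Measure (Fin n → ℤ))
      (f := fun k => a k * ebr k ^ s₁) (g := fun k => ebr k ^ (s₂ - s₁))
      (Measurable.of_discrete).aemeasurable (Measurable.of_discrete).aemeasurable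
    simp only [lintegral_count, Pi.mul_apply] at hH
    simpa only [hsplit] using hH

/-! ### Necessity -/

/-- Testing the embedding on unit sequences, at the points `k = (m, …, m)` with `m → ∞`. -/
lemma weight_le_of_embedding {n : ℕ} (hn : 1 ≤ n) {q₁ q₂ : ℝ≥0∞} (hq₁ : 0 < q₁) (hq₂ : 0 < q₂)
    {s₁ s₂ : ℝ} {C : ℝ≥0} (hC : ∀ a : (Fin n → ℤ) → ℝ≥0∞, lns n q₂ s₂ a ≤ C * lns n q₁ s₁ a) :
    s₂ ≤ s₁ := by
  by_contra! hs
  have hle : ∀ k : Fin n → ℤ, ebr k ^ (s₂ - s₁) ≤ C := by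
    intro k
    have hsupp : ∀ j, j ≠ k → (Pi.single k (1 : ℝ≥0∞) : (Fin n → ℤ) → ℝ≥0∞) j = 0 := fun j hj =>
      Pi.single_eq_of_ne hj _
    have hup : lns n q₁ s₁ (Pi.single k 1) ≤ ebr k ^ s₁ := by
      by_cases h1 : q₁ = ∞
      · subst h1
        rw [lns_top]
        refine iSup_le fun j => ?_
        by_cases hj : j = k
        · subst hj; simp
        · simp [hsupp j hj]
      · have hp1 : 0 < q₁.toReal := ENNReal.toReal_pos hq₁.ne' h1
        rw [lns_fin n h1, one_div, ENNReal.rpow_inv_le_iff hp1, tsum_eq_single k]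
        · simp
        · intro j hj
          simp [hsupp j hj, ENNReal.zero_rpow_of_pos hp1]
    have h := ((le_lns n hq₂ s₂ (Pi.single k 1) k).trans (hC _)).trans (mul_le_mul_right hup _)
    rw [Pi.single_eq_same, one_mul] at h
    calc ebr k ^ (s₂ - s₁) = ebr k ^ s₂ * ebr k ^ (-s₁) := by rw [← ebr_rpow_add, sub_eq_add_neg]
      _ ≤ C * ebr k ^ s₁ * ebr k ^ (-s₁) := by gcongr
      _ = C := by rw [mul_assoc, ← ebr_rpow_add, add_neg_cancel, ENNReal.rpow_zero, mul_one]
  -- A bound on a positive power of the bracket bounds the bracket, but `⟨(m, …, m)⟩ ≥ m`.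
  have hs' : 0 < s₂ - s₁ := sub_pos.2 hs
  have hB : ((C : ℝ≥0∞) ^ (s₂ - s₁)⁻¹) ≠ ∞ :=
    ENNReal.rpow_ne_top_of_nonneg (by positivity) ENNReal.coe_ne_top
  obtain ⟨m, hm⟩ := ENNReal.exists_nat_gt hB
  have h := (ENNReal.le_rpow_inv_iff hs').2 (hle (fun _ => (m : ℤ)))
  refine absurd (h.trans_lt hm) (not_lt.2 ?_)
  rw [ebr, ← ENNReal.ofReal_natCast]
  apply ENNReal.ofReal_le_ofReal
  apply Real.le_sqrt_of_sq_le
  have h1 : (1 : ℝ) ≤ n := by exact_mod_cast hn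
  simp only [Int.cast_natCast, Finset.sum_const, Finset.card_univ, Fintype.card_fin, nsmul_eq_mul]
  nlinarith [sq_nonneg (m : ℝ)]

/-- Testing the embedding on finite truncations of `⟨k⟩^{-s₁ - n/q₁}`: both norms are governed
by the partial sums of the divergent series `∑ ⟨k⟩^{-n}`. -/
lemma not_embedding_of_critical {n : ℕ} (hn : 1 ≤ n) {q₁ q₂ : ℝ≥0∞} (hq₁ : 0 < q₁)
    {s₁ s₂ : ℝ} (hiv : iv q₁ < iv q₂)
    (hcrit : iv q₁ + s₁ / (n : ℝ) ≤ iv q₂ + s₂ / (n : ℝ)) {C : ℝ≥0}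
    (hC : ∀ a : (Fin n → ℤ) → ℝ≥0∞, lns n q₂ s₂ a ≤ C * lns n q₁ s₁ a) : False := by
  classical
  have hn0 : (0 : ℝ) < n := by exact_mod_cast hn
  have hiv1 : 0 ≤ iv q₁ := ENNReal.toReal_nonneg
  have h2 : q₂ ≠ ∞ := by
    rintro rfl
    have h0 : iv ∞ = 0 := by simp [iv]
    linarith
  have hp2 : 0 < q₂.toReal := by
    rw [iv_eq q₂] at hiv
    exact one_div_pos.1 (hiv1.trans_lt hiv)
  have hcrit' : -(n * iv q₂) ≤ -(s₁ + n * iv q₁) + s₂ := by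
    have := mul_le_mul_of_nonneg_left hcrit hn0.le
    rw [mul_add, mul_add, mul_div_cancel₀ _ hn0.ne', mul_div_cancel₀ _ hn0.ne'] at this
    linarith
  set S : Finset (Fin n → ℤ) → ℝ≥0∞ := fun F => ∑ k ∈ F, ebr k ^ (-(n : ℝ)) with hS
  set a : Finset (Fin n → ℤ) → (Fin n → ℤ) → ℝ≥0∞ :=
    fun F k => if k ∈ F then ebr k ^ (-(s₁ + n * iv q₁)) else 0 with ha
  have hup : ∀ F, lns n q₁ s₁ (a F) ≤ S F ^ iv q₁ := by
    intro F
    by_cases h1 : q₁ = ∞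
    · subst h1
      rw [lns_top]
      refine iSup_le fun k => ?_
      by_cases hk : k ∈ F
      · simp [ha, hk, iv, ← ebr_rpow_add]
      · simp [ha, hk]
    · have hp1 : 0 < q₁.toReal := ENNReal.toReal_pos hq₁.ne' h1
      rw [lns_fin n h1, ← iv_eq, tsum_eq_sum (s := F)]
      · refine ENNReal.rpow_le_rpow (Finset.sum_le_sum fun k hk => le_of_eq ?_) hiv1
        simp only [ha, hk, if_true]
        rw [← ebr_rpow_add, ← ENNReal.rpow_mul, iv_eq]
        congr 1
        field_simp
        ring
      · intro k hk
        simp [ha, hk, ENNReal.zero_rpow_of_pos hp1]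
  have hlow : ∀ F, S F ^ iv q₂ ≤ lns n q₂ s₂ (a F) := by
    intro F
    rw [lns_fin n h2, ← iv_eq]
    refine ENNReal.rpow_le_rpow (le_trans (Finset.sum_le_sum fun k hk => ?_)
      (ENNReal.sum_le_tsum F)) (hiv1.trans hiv.le)
    simp only [ha, hk, if_true]
    rw [← ebr_rpow_add, ← ENNReal.rpow_mul]
    refine ENNReal.rpow_le_rpow_of_exponent_le (one_le_ebr k) ?_
    have := mul_le_mul_of_nonneg_right hcrit' hp2.le
    rwa [iv_eq q₂, neg_mul, mul_assoc, one_div_mul_cancel hp2.ne', mul_one] at this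
  have hd : 0 < iv q₂ - iv q₁ := sub_pos.2 hiv
  have hbd : ∀ F, S F ≤ (C : ℝ≥0∞) ^ (iv q₂ - iv q₁)⁻¹ := by
    intro F
    rw [ENNReal.le_rpow_inv_iff hd]
    by_cases h0 : S F = 0
    · rw [h0, ENNReal.zero_rpow_of_pos hd]
      exact zero_le
    have htop : S F ≠ ∞ := by
      refine ENNReal.sum_ne_top.2 fun k _ => ?_
      exact ENNReal.rpow_ne_top_of_ne_zero (ebr_ne_zero k) (ebr_ne_top k)
    have h := (hlow F).trans ((hC _).trans (mul_le_mul_right (hup F) _))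
    calc S F ^ (iv q₂ - iv q₁) = S F ^ iv q₂ * S F ^ (-iv q₁) := by
          rw [← ENNReal.rpow_add _ _ h0 htop, sub_eq_add_neg]
      _ ≤ C * S F ^ iv q₁ * S F ^ (-iv q₁) := by gcongr
      _ = C := by
          rw [mul_assoc, ← ENNReal.rpow_add _ _ h0 htop, add_neg_cancel, ENNReal.rpow_zero,
            mul_one]
  have hsum := tsum_ebr_eq_top hn
  rw [ENNReal.tsum_eq_iSup_sum] at hsum
  have : (∞ : ℝ≥0∞) ≤ (C : ℝ≥0∞) ^ (iv q₂ - iv q₁)⁻¹ := hsum ▸ iSup_le hbd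
  exact ENNReal.rpow_ne_top_of_nonneg (by positivity) ENNReal.coe_ne_top (top_le_iff.1 this)

end

/-- sharp embedding between weighted discrete Lebesgue spaces. -/
theorem discrete_embedding_sharp
    (n : ℕ) (hn : 1 ≤ n) (q₁ q₂ : ℝ≥0∞) (hq₁ : 0 < q₁) (hq₂ : 0 < q₂) (s₁ s₂ : ℝ) :
    (∃ C : ℝ≥0, ∀ a : (Fin n → ℤ) → ℝ≥0∞, lns n q₂ s₂ a ≤ C * lns n q₁ s₁ a) ↔
      ((s₂ ≤ s₁ ∧ iv q₂ + s₂ / (n : ℝ) < iv q₁ + s₁ / (n : ℝ)) ∨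
        (s₂ = s₁ ∧ q₂ = q₁)) := by
  have hn0 : (0 : ℝ) < n := by exact_mod_cast hn
  constructor
  · rintro ⟨C, hC⟩
    have hs := weight_le_of_embedding hn hq₁ hq₂ hC
    by_cases hlt : iv q₂ + s₂ / (n : ℝ) < iv q₁ + s₁ / (n : ℝ)
    · exact Or.inl ⟨hs, hlt⟩
    rw [not_lt] at hlt
    have hsn : s₂ / (n : ℝ) ≤ s₁ / (n : ℝ) := by gcongr
    have hle : ¬ iv q₁ < iv q₂ := fun hiv => not_embedding_of_critical hn hq₁ hiv hlt hC
    have hiv : iv q₁ = iv q₂ := by linarith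
    have hs' : s₂ / (n : ℝ) = s₁ / (n : ℝ) := by linarith
    refine Or.inr ⟨(div_left_inj' hn0.ne').1 hs', ?_⟩
    have := (ENNReal.toReal_eq_toReal_iff' (ENNReal.inv_ne_top.2 hq₂.ne')
      (ENNReal.inv_ne_top.2 hq₁.ne')).1 hiv.symm
    exact inv_injective this
  · intro h
    have hs : s₂ ≤ s₁ := h.elim (fun h => h.1) (fun h => h.1.le)
    rcases le_or_gt q₁ q₂ with hq | hq
    · refine ⟨1, fun a => ?_⟩
      rw [ENNReal.coe_one, one_mul]
      exact (lns_mono_weight n q₂ hs a).trans (lns_mono_exp n hq₁ hq s₁ a)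
    · rcases h with h | h
      · exact embedding_of_lt hn hq₂ hq h.2
      · exact absurd h.2 hq.ne
end
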